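/- Let Ω and Ω' be open bounded convex sets in ℝⁿ with their Hilbert metrics and let τ: Ω → Ω' be an isometry. If Ω is a cone, then Ω' is a cone; moreover, if L is a line in Ω from a vertex v of Ω to a corresponding base B of Ω, then τ(L) is a line in Ω' from a vertex v' of Ω' to a corresponding base B' of Ω'. -/

import Mathlib

/-!
The exponential of the Hilbert metric is a maximum of cross ratios of affine functionals:
`exp d_Ω(p, q) = max (φ(p) ψ(q)) / (φ(q) ψ(p))` over affine `φ, ψ` positive on `Ω`
(`le_hilbertExp`, `exists_eq_hilbertExp`). On the line in `Ω` with ends `α`, `β`, the point dividing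
the segment in ratio `x : 1` is written `pt α β x`, and there the metric is `|log x - log y|`.

In a cone, the lines from the vertex to the base have two special properties. Each is the unique
geodesic between any two of its points (`ConeFacts.rigid`), because the functionals vanishing at the
vertex form a cone with nonempty interior; hence an isometry maps it onto a whole line of `Ω'`,
multiplying the coordinate by a constant (`exists_chord_image`). And the distance between points
with coordinates `x`, `y` on two vertex lines is given by
`exp d = max 1 (A x / y) * max 1 (A' y / x)` for constants `A, A'` (`ConeFacts.exists_dist_formula`).

Consider two lines `α₁β₁`, `α₂β₂` of `Ω'` with this distance formula. Letting the points run to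
the ends shows that a functional vanishing at `α₁` vanishes at `α₂`, and likewise for the `β` ends
(`LinePair.end_bound`). By compactness of the normalized functionals the resulting bounds are
sharp: with `R` the sharp bound for `χ(α₁) / χ(α₂)` and `1 / S` that for `k₂ χ(β₂) / (k₁ χ(β₁))`,
one gets `R = A' S`, and `R' = A S'` after exchanging the lines (`LinePair.exists_bounds`). So
`A A' = (R R') / (S S')`. At the coordinate ratio `R S'` the distance is at least `log (A A')`, while
the bounds give at most `log (max (R R') (1 / (S S')))`. Since `R R' ≥ 1` and `S S' ≤ 1`, one of them
is `1`, which means `α₁ = α₂` or `β₁ = β₂` (`LinePair.common_end`).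

Applied to all pairs of images of vertex lines, this yields a common end `v'` of all of them, and
the other ends all lie in one supporting hyperplane of `Ω'`. As these lines cover `Ω'`, it is a
cone with vertex `v'` whose base is the set of the other ends (`isConeWith_of_chords`).
-/

open Set
open scoped LinearAlgebra.Projectivization
open scoped Classical

noncomputable section

abbrev Euc (n : ℕ) := EuclideanSpace ℝ (Fin n)

/-- `α` and `β` are the two points where the straight line through `x` and `y`
meets the boundary of `Ω`, labeled so that `|α−x| < |α−y|` and `|β−y| < |β−x|`. -/
def IsHilbertPair {n : ℕ} (Ω : Set (Euc n)) (x y α β : Euc n) : Prop :=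
  α ∈ frontier Ω ∧ β ∈ frontier Ω ∧
    Collinear ℝ ({α, x, y} : Set (Euc n)) ∧ Collinear ℝ ({β, x, y} : Set (Euc n)) ∧
    dist α x < dist α y ∧ dist β y < dist β x

/-- The Hilbert metric of `Ω`: `d_Ω(x,y) = ln((|α−y|/|α−x|)·(|β−x|/|β−y|))` for `x ≠ y`
(where `α, β` are as in `IsHilbertPair`; for `x ≠ y` in a convex domain `Ω` such a pair
exists and is unique), and `d_Ω(x,x) = 0` (no such pair exists when `x = y`). -/
def hilbertDist {n : ℕ} (Ω : Set (Euc n)) (x y : Euc n) : ℝ :=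
  if h : ∃ p : Euc n × Euc n, IsHilbertPair Ω x y p.1 p.2 then
    Real.log ((dist h.choose.1 y / dist h.choose.1 x) * (dist h.choose.2 x / dist h.choose.2 y))
  else 0

/-- An isometry of Hilbert geometries: a surjective distance preserving map. -/
def IsHilbertIsometry {n : ℕ} (Ω Ω' : Set (Euc n)) (τ : Euc n → Euc n) : Prop :=
  Set.MapsTo τ Ω Ω' ∧ Set.SurjOn τ Ω Ω' ∧
    ∀ x ∈ Ω, ∀ y ∈ Ω, hilbertDist Ω' (τ x) (τ y) = hilbertDist Ω x y

/-- The standard affine chart `ℝⁿ → ℝPⁿ`, `x ↦ [x : 1]`. -/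
def chart {n : ℕ} (x : Euc n) : Projectivization ℝ (Fin (n + 1) → ℝ) :=
  Projectivization.mk ℝ ((Fin.snoc (fun i => x i) 1 : Fin (n + 1) → ℝ))
    (fun h => one_ne_zero (α := ℝ) (by simpa using congrFun h (Fin.last n)))

/-- The projective transformation of `ℝPⁿ` induced by an element of `GL_{n+1}(ℝ)`
(every element of `PGL_{n+1}(ℝ)` arises this way). -/
def projMap {n : ℕ} (g : (Fin (n + 1) → ℝ) ≃ₗ[ℝ] (Fin (n + 1) → ℝ)) :
    Projectivization ℝ (Fin (n + 1) → ℝ) → Projectivization ℝ (Fin (n + 1) → ℝ) :=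
  Projectivization.map (g : (Fin (n + 1) → ℝ) →ₗ[ℝ] (Fin (n + 1) → ℝ)) g.injective

/-- `τ` agrees on `Ω` with (the restriction of) a projective transformation of `ℝPⁿ`. -/
def IsProjectiveOn {n : ℕ} (Ω : Set (Euc n)) (τ : Euc n → Euc n) : Prop :=
  ∃ g : (Fin (n + 1) → ℝ) ≃ₗ[ℝ] (Fin (n + 1) → ℝ),
    ∀ x ∈ Ω, chart (τ x) = projMap g (chart x)

/-- A ray in `Ω`: the intersection with `Ω` of a Euclidean ray starting at a point of `Ω`. -/
def IsRayIn {n : ℕ} (Ω r : Set (Euc n)) : Prop :=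
  ∃ p ∈ Ω, ∃ d : Euc n, d ≠ 0 ∧ r = {x | ∃ t : ℝ, 0 ≤ t ∧ x = p + t • d} ∩ Ω

/-- A line in `Ω`: the nonempty intersection of a straight line with `Ω`. -/
def IsLineIn {n : ℕ} (Ω L : Set (Euc n)) : Prop :=
  L.Nonempty ∧ ∃ p d : Euc n, d ≠ 0 ∧ L = {x | ∃ t : ℝ, x = p + t • d} ∩ Ω

/-- `a` is an accumulation point of the set `s ⊆ Ω` on the boundary of `Ω`.
For a ray `r` in a convex domain `Ω` there is exactly one such point, denoted `a(r)`. -/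
def IsBdryLimit {n : ℕ} (Ω s : Set (Euc n)) (a : Euc n) : Prop :=
  a ∈ frontier Ω ∧ a ∈ closure s

/-- `e` is a focusing point of the isometry `τ : Ω → Ω'`: an extreme point of the closure
of `Ω` such that for any two rays `r₁, r₂` in `Ω` with `a(r₁) = a(r₂) = e` one has
`a(τ(r₁)) = a(τ(r₂))`. -/
def IsFocusingPoint {n : ℕ} (Ω Ω' : Set (Euc n)) (τ : Euc n → Euc n) (e : Euc n) : Prop :=
  e ∈ Set.extremePoints ℝ (closure Ω) ∧
    ∀ r₁ r₂ : Set (Euc n), IsRayIn Ω r₁ → IsRayIn Ω r₂ →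
      IsBdryLimit Ω r₁ e → IsBdryLimit Ω r₂ e →
      ∀ a₁ a₂ : Euc n, IsBdryLimit Ω' (τ '' r₁) a₁ → IsBdryLimit Ω' (τ '' r₂) a₂ → a₁ = a₂

/-- An extreme line in `Ω`: a line in `Ω` whose closure meets `∂Ω` in extreme points
of the closure of `Ω`. -/
def IsExtremeLine {n : ℕ} (Ω L : Set (Euc n)) : Prop :=
  IsLineIn Ω L ∧ ∀ x ∈ closure L ∩ frontier Ω, x ∈ Set.extremePoints ℝ (closure Ω)

/-- `s` is rigid in `Ω`: for any two points `a, b` of `s` the segment `[a,b]` is the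
unique geodesic from `a` to `b` in `(Ω, d_Ω)`, i.e. every point `z` with
`d(a,z) + d(z,b) = d(a,b)` lies on the segment `[a,b]`. -/
def IsRigidSet {n : ℕ} (Ω s : Set (Euc n)) : Prop :=
  ∀ a ∈ s, ∀ b ∈ s, ∀ z ∈ Ω,
    hilbertDist Ω a z + hilbertDist Ω z b = hilbertDist Ω a b → z ∈ segment ℝ a b

/-- A face of a closed convex set `C`: a convex subset `F ⊆ C` such that whenever an open
segment between two points of `C` meets `F`, the whole closed segment lies in `F`. -/
def IsFace {n : ℕ} (C F : Set (Euc n)) : Prop :=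
  Convex ℝ F ∧ IsExtreme ℝ C F

/-- A face of `C` which is neither empty nor all of `C`. -/
def IsProperFace {n : ℕ} (C F : Set (Euc n)) : Prop :=
  IsFace C F ∧ F.Nonempty ∧ F ≠ C

/-- `Ω` is a cone with vertex `v` and base `B`: `B` is an `(n−1)`-dimensional convex
domain lying in a hyperplane not containing `v`, and `Ω` is the union of the open
segments from `v` to the points of `B`. -/
def IsConeWith {n : ℕ} (Ω : Set (Euc n)) (v : Euc n) (B : Set (Euc n)) : Prop :=
  ∃ (f : Euc n →ₗ[ℝ] ℝ) (c : ℝ), f ≠ 0 ∧ (∀ b ∈ B, f b = c) ∧ f v ≠ c ∧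
    B.Nonempty ∧ Convex ℝ B ∧ Bornology.IsBounded B ∧
    B = intrinsicInterior ℝ B ∧
    (affineSpan ℝ B : Set (Euc n)) = {x | f x = c} ∧
    Ω = ⋃ b ∈ B, openSegment ℝ v b

/-- `Ω` is a cone. -/
def IsCone {n : ℕ} (Ω : Set (Euc n)) : Prop :=
  ∃ v B, IsConeWith Ω v B

/-! ### Affine functionals positive on a convex domain -/

/-- The affine functional on `ℝⁿ` encoded by the pair `w`, namely `z ↦ ⟪w.1, z⟫ + w.2`. -/
def affEval {n : ℕ} (w : Euc n × ℝ) (z : Euc n) : ℝ := inner ℝ w.1 z + w.2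

/-- The affine functional encoded by `w` is positive on `Ω`. -/
def PosOn {n : ℕ} (Ω : Set (Euc n)) (w : Euc n × ℝ) : Prop := ∀ z ∈ Ω, 0 < affEval w z

/-- The point of the open segment from `α` to `β` that divides it in the ratio `x : 1`;
thus `pt α β x` tends to `α` as `x → 0` and to `β` as `x → ∞`. -/
def pt {n : ℕ} (α β : Euc n) (x : ℝ) : Euc n := (1 / (1 + x)) • α + (x / (1 + x)) • β

/-- The multiplicative Hilbert metric, `exp d_Ω`. -/
def hilbertExp {n : ℕ} (Ω : Set (Euc n)) (p q : Euc n) : ℝ := Real.exp (hilbertDist Ω p q)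

/-- `α` and `β` are the two ends of a line in `Ω`: the open segment between them lies in `Ω`,
and each of them lies on a hyperplane disjoint from `Ω`. -/
structure IsChord {n : ℕ} (Ω : Set (Euc n)) (α β : Euc n) : Prop where
  left_mem : α ∈ closure Ω
  right_mem : β ∈ closure Ω
  pt_mem : ∀ x : ℝ, 0 < x → pt α β x ∈ Ω
  exists_right : ∃ φ, PosOn Ω φ ∧ affEval φ β = 0
  exists_left : ∃ ψ, PosOn Ω ψ ∧ affEval ψ α = 0

theorem IsChord.symm_pt {n : ℕ} (α β : Euc n) {x : ℝ} (hx : 0 < x) :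
    pt β α x = pt α β x⁻¹ := by
  unfold pt
  rw [add_comm]
  congr 2 <;> field_simp <;> ring

theorem IsChord.symm {n : ℕ} {Ω : Set (Euc n)} {α β : Euc n} (h : IsChord Ω α β) :
    IsChord Ω β α :=
  ⟨h.right_mem, h.left_mem,
    fun x hx => by rw [IsChord.symm_pt α β hx]; exact h.pt_mem _ (inv_pos.2 hx),
    h.exists_left, h.exists_right⟩

theorem affEval_comb {n : ℕ} (w : Euc n × ℝ) (x y : Euc n) {a b : ℝ} (h : a + b = 1) :
    affEval w (a • x + b • y) = a * affEval w x + b * affEval w y := by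
  unfold affEval
  rw [inner_add_right, inner_smul_right, inner_smul_right]
  have : w.2 = (a + b) * w.2 := by rw [h, one_mul]
  linarith

theorem affEval_pt {n : ℕ} (w : Euc n × ℝ) (α β : Euc n) {x : ℝ} (hx : 0 < x) :
    affEval w (pt α β x) = (affEval w α + x * affEval w β) / (1 + x) := by
  have : (1 + x) ≠ 0 := by positivity
  unfold pt
  rw [affEval_comb w α β (by field_simp)]
  field_simp

theorem affEval_smul {n : ℕ} (c : ℝ) (w : Euc n × ℝ) (z : Euc n) :
    affEval (c • w) z = c * affEval w z := by
  unfold affEval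
  rw [Prod.smul_fst, Prod.smul_snd, real_inner_smul_left, smul_eq_mul]; ring

theorem affEval_add {n : ℕ} (w w' : Euc n × ℝ) (z : Euc n) :
    affEval (w + w') z = affEval w z + affEval w' z := by
  unfold affEval
  rw [Prod.fst_add, Prod.snd_add, inner_add_left]; ring

theorem affEval_one {n : ℕ} (z : Euc n) : affEval ((0, 1) : Euc n × ℝ) z = 1 := by
  simp [affEval]

theorem posOn_one {n : ℕ} (Ω : Set (Euc n)) : PosOn Ω (0, 1) := fun z _ => by
  rw [affEval_one]; exact one_pos

theorem PosOn.smul {n : ℕ} {Ω : Set (Euc n)} {w : Euc n × ℝ} (h : PosOn Ω w) {c : ℝ}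
    (hc : 0 < c) : PosOn Ω (c • w) := fun z hz => by
  rw [affEval_smul]; exact mul_pos hc (h z hz)

theorem continuous_affEval_right {n : ℕ} (w : Euc n × ℝ) : Continuous (affEval w) := by
  unfold affEval; fun_prop

theorem continuous_affEval_left {n : ℕ} (z : Euc n) :
    Continuous (fun w : Euc n × ℝ => affEval w z) := by
  unfold affEval; fun_prop

theorem PosOn.nonneg_closure {n : ℕ} {Ω : Set (Euc n)} {w : Euc n × ℝ} (h : PosOn Ω w)
    {z : Euc n} (hz : z ∈ closure Ω) : 0 ≤ affEval w z := by
  have hcl : IsClosed {z | 0 ≤ affEval w z} :=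
    isClosed_le continuous_const (continuous_affEval_right w)
  exact closure_minimal (fun y hy => (h y hy).le) hcl hz

/-- A hyperplane through a point outside an open convex set that misses the set. -/
theorem exists_posOn_eq_zero {n : ℕ} {Ω : Set (Euc n)} (hop : IsOpen Ω) (hcv : Convex ℝ Ω)
    {β : Euc n} (hβ : β ∉ Ω) : ∃ φ, PosOn Ω φ ∧ affEval φ β = 0 := by
  obtain ⟨f, hf⟩ := geometric_hahn_banach_open_point hcv hop hβ
  have key : ∀ z, affEval (-(InnerProductSpace.toDual ℝ (Euc n)).symm f, f β) z = f β - f z := by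
    intro z
    unfold affEval
    simp only [inner_neg_left, InnerProductSpace.toDual_symm_apply]
    ring
  refine ⟨(-(InnerProductSpace.toDual ℝ (Euc n)).symm f, f β), fun z hz => ?_, ?_⟩
  · rw [key]; linarith [hf z hz]
  · rw [key]; ring

/-- The functionals nonnegative on `Ω` and equal to `1` at `p₀`. -/
def normalized {n : ℕ} (Ω : Set (Euc n)) (p₀ : Euc n) : Set (Euc n × ℝ) :=
  {w | (∀ z ∈ Ω, 0 ≤ affEval w z) ∧ affEval w p₀ = 1}

theorem posOn_of_normalized {n : ℕ} {Ω : Set (Euc n)} (hop : IsOpen Ω) {p₀ : Euc n}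
    {w : Euc n × ℝ} (hw : w ∈ normalized Ω p₀) : PosOn Ω w := by
  intro z hz
  refine lt_of_le_of_ne (hw.1 z hz) fun h0 => ?_
  -- Otherwise the functional is negative slightly beyond `z` as seen from `p₀`.
  have hc : Filter.Tendsto (fun ε : ℝ => (-ε) • p₀ + (1 + ε) • z) (nhdsWithin 0 (Ioi 0))
      (nhds z) := by
    have : Continuous (fun ε : ℝ => (-ε) • p₀ + (1 + ε) • z) := by fun_prop
    have h := this.tendsto 0
    simp only [neg_zero, zero_smul, add_zero, one_smul, zero_add] at h
    exact h.mono_left nhdsWithin_le_nhds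
  have h1 := hc.eventually (hop.mem_nhds hz)
  obtain ⟨ε, hε, hε0⟩ := (h1.and self_mem_nhdsWithin).exists
  have h2 := hw.1 _ hε
  rw [affEval_comb w p₀ z (by ring), hw.2, ← h0] at h2
  have : (0 : ℝ) < ε := hε0
  linarith

theorem isCompact_normalized {n : ℕ} {Ω : Set (Euc n)} (hop : IsOpen Ω) {p₀ : Euc n}
    (hp : p₀ ∈ Ω) : IsCompact (normalized Ω p₀) := by
  refine Metric.isCompact_of_isClosed_isBounded ?_ ?_
  · have : normalized Ω p₀ =
        (⋂ z ∈ Ω, {w | 0 ≤ affEval w z}) ∩ {w | affEval w p₀ = 1} := by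
      ext w; simp [normalized]
    rw [this]
    refine IsClosed.inter (isClosed_biInter fun z _ => ?_) ?_
    · exact isClosed_le continuous_const (continuous_affEval_left z)
    · exact isClosed_eq (continuous_affEval_left p₀) continuous_const
  · obtain ⟨r, hr, hball⟩ := Metric.isOpen_iff.1 hop p₀ hp
    rw [isBounded_iff_forall_norm_le]
    refine ⟨max (2 / r) (1 + 2 / r * ‖p₀‖), fun w hw => ?_⟩
    have h1 : ‖w.1‖ ≤ 2 / r := by
      by_cases h0 : w.1 = 0
      · rw [h0, norm_zero]; positivity
      have hn : 0 < ‖w.1‖ := norm_pos_iff.2 h0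
      have hz : p₀ - (r / 2 / ‖w.1‖) • w.1 ∈ Ω := by
        apply hball
        rw [Metric.mem_ball, dist_eq_norm, sub_sub_cancel_left, norm_neg, norm_smul,
          Real.norm_of_nonneg (by positivity)]
        field_simp
        linarith
      have h2 := hw.1 _ hz
      have h3 := hw.2
      unfold affEval at h2 h3
      rw [inner_sub_right, inner_smul_right, real_inner_self_eq_norm_sq] at h2
      have h4 : r / 2 / ‖w.1‖ * ‖w.1‖ ^ 2 = r / 2 * ‖w.1‖ := by field_simp
      rw [le_div_iff₀ hr]
      nlinarith
    have h2 : |w.2| ≤ 1 + 2 / r * ‖p₀‖ := by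
      have h3 := hw.2
      unfold affEval at h3
      have h4 : w.2 = 1 - inner ℝ w.1 p₀ := by linarith
      have h5 := abs_real_inner_le_norm w.1 p₀
      have h6 : ‖w.1‖ * ‖p₀‖ ≤ 2 / r * ‖p₀‖ := by gcongr
      have h7 := abs_sub (1 : ℝ) (inner ℝ w.1 p₀)
      rw [abs_one] at h7
      rw [h4]; linarith
    exact max_le_max h1 h2

theorem PosOn.normalize {n : ℕ} {Ω : Set (Euc n)} {w : Euc n × ℝ} (h : PosOn Ω w) {p₀ : Euc n}
    (hp : p₀ ∈ Ω) : (affEval w p₀)⁻¹ • w ∈ normalized Ω p₀ := by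
  have h0 := h p₀ hp
  exact ⟨fun z hz => (h.smul (inv_pos.2 h0) z hz).le, by
    rw [affEval_smul, inv_mul_cancel₀ (ne_of_gt h0)]⟩

/-! ### The Hilbert metric as a maximum of ratios of positive functionals -/

theorem not_isHilbertPair_self {n : ℕ} {Ω : Set (Euc n)} (p : Euc n) (α β : Euc n) :
    ¬ IsHilbertPair Ω p p α β := fun h => lt_irrefl _ h.2.2.2.2.1

theorem hilbertExp_self {n : ℕ} (Ω : Set (Euc n)) (p : Euc n) : hilbertExp Ω p p = 1 := by
  unfold hilbertExp hilbertDist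
  rw [dif_neg, Real.exp_zero]
  rintro ⟨q, hq⟩
  exact not_isHilbertPair_self p _ _ hq

theorem exists_frontier_beyond {n : ℕ} {Ω : Set (Euc n)} (hop : IsOpen Ω) (hcv : Convex ℝ Ω)
    (hbd : Bornology.IsBounded Ω) {p q : Euc n} (hp : p ∈ Ω) (hq : q ∈ Ω) (hne : p ≠ q) :
    ∃ s : ℝ, 1 < s ∧ p + s • (q - p) ∈ frontier Ω := by
  have hd : q - p ≠ 0 := sub_ne_zero.2 hne.symm
  have hcont : Continuous (fun s : ℝ => p + s • (q - p)) := by fun_prop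
  have hpre : IsPreconnected ((fun s : ℝ => p + s • (q - p)) '' Ici 0) :=
    isPreconnected_Ici.image _ hcont.continuousOn
  have h1 : (((fun s : ℝ => p + s • (q - p)) '' Ici 0) ∩ Ω).Nonempty :=
    ⟨p, ⟨0, self_mem_Ici, by simp⟩, hp⟩
  have h2 : (((fun s : ℝ => p + s • (q - p)) '' Ici 0) ∩ Ωᶜ).Nonempty := by
    obtain ⟨R, hR⟩ := isBounded_iff_forall_norm_le.1 hbd
    have hR0 : 0 ≤ R := (norm_nonneg _).trans (hR p hp)
    have hn : 0 < ‖q - p‖ := norm_pos_iff.2 hd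
    refine ⟨_, ⟨(2 * R + 1) / ‖q - p‖, ?_, rfl⟩, fun hmem => ?_⟩
    · exact mem_Ici.2 (by positivity)
    · have h3 := hR _ hmem
      have h4 : ‖((2 * R + 1) / ‖q - p‖) • (q - p)‖ = 2 * R + 1 := by
        rw [norm_smul, Real.norm_of_nonneg (by positivity)]; field_simp
      have h5 : ‖((2 * R + 1) / ‖q - p‖) • (q - p)‖ ≤
          ‖p + ((2 * R + 1) / ‖q - p‖) • (q - p)‖ + ‖p‖ := by
        have := norm_sub_le (p + ((2 * R + 1) / ‖q - p‖) • (q - p)) p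
        rwa [add_sub_cancel_left] at this
      have := hR p hp
      linarith
  obtain ⟨x, ⟨s, hs, rfl⟩, hx⟩ :
      (((fun s : ℝ => p + s • (q - p)) '' Ici 0) ∩ frontier Ω).Nonempty := by
    by_contra hemp
    have hout : ∀ y ∈ (fun s : ℝ => p + s • (q - p)) '' Ici 0, y ∉ Ω → y ∉ closure Ω := by
      intro y hy hyΩ hyc
      exact hemp ⟨y, hy, by rw [hop.frontier_eq]; exact ⟨hyc, hyΩ⟩⟩
    obtain ⟨y, -, hy1, hy2⟩ := hpre Ω (closure Ω)ᶜ hop isClosed_closure.isOpen_compl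
      (fun y hy => by
        by_cases hyΩ : y ∈ Ω
        · exact Or.inl hyΩ
        · exact Or.inr (hout y hy hyΩ)) h1
      (h2.mono fun y hy => ⟨hy.1, hout y hy.1 hy.2⟩)
    exact hy2 (subset_closure hy1)
  refine ⟨s, ?_, hx⟩
  by_contra hs1
  have hmem : p + s • (q - p) ∈ Ω := by
    have := hcv hp hq (a := 1 - s) (b := s) (by linarith) hs (by ring)
    convert this using 1
    module
  rw [hop.frontier_eq] at hx
  exact hx.2 hmem

/-- The geometry of the two boundary points `α, β` on the line through `p` and `q`: in the
coordinate `pt α β`, the points `p` and `q` sit at `x < y`, and the cross ratio is `y / x`. -/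
theorem IsHilbertPair.chord {n : ℕ} {Ω : Set (Euc n)} (hop : IsOpen Ω) (hcv : Convex ℝ Ω)
    {p q α β : Euc n} (hp : p ∈ Ω) (hq : q ∈ Ω) (hne : p ≠ q)
    (h : IsHilbertPair Ω p q α β) :
    ∃ x y : ℝ, IsChord Ω α β ∧ 0 < x ∧ x < y ∧ p = pt α β x ∧ q = pt α β y ∧
      (dist α q / dist α p) * (dist β p / dist β q) = y / x := by
  obtain ⟨hα, hβ, hcα, hcβ, hdα, hdβ⟩ := h
  have hαc := frontier_subset_closure hα
  have hβc := frontier_subset_closure hβ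
  rw [hop.frontier_eq] at hα hβ
  have hnorm : 0 < ‖q - p‖ := norm_pos_iff.2 (sub_ne_zero.2 hne.symm)
  have hline : ∀ γ : Euc n, Collinear ℝ ({γ, p, q} : Set (Euc n)) →
      ∃ t : ℝ, γ = p + t • (q - p) := by
    intro γ hγ
    have h1 : γ ∈ line[ℝ, p, q] :=
      hγ.mem_affineSpan_of_mem_of_ne (by simp) (by simp) (by simp) hne
    obtain ⟨t, ht⟩ := mem_affineSpan_pair_iff_exists_lineMap_eq.1 h1
    exact ⟨t, by rw [← ht, AffineMap.lineMap_apply]; simp [add_comm]⟩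
  have hdp : ∀ t : ℝ, dist (p + t • (q - p)) p = |t| * ‖q - p‖ := by
    intro t
    rw [dist_eq_norm, add_sub_cancel_left, norm_smul, Real.norm_eq_abs]
  have hdq : ∀ t : ℝ, dist (p + t • (q - p)) q = |t - 1| * ‖q - p‖ := by
    intro t
    rw [dist_eq_norm, ← Real.norm_eq_abs, ← norm_smul]
    congr 1
    module
  have hin : ∀ t : ℝ, 0 ≤ t → t ≤ 1 → p + t • (q - p) ∈ Ω := by
    intro t h0 h1
    have := hcv hp hq (a := 1 - t) (b := t) (by linarith) h0 (by ring)
    convert this using 1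
    module
  obtain ⟨t, rfl⟩ := hline α hcα
  obtain ⟨s, rfl⟩ := hline β hcβ
  rw [hdp, hdq] at hdα hdβ
  have ht : t < 0 := by
    have h1 : |t| < |t - 1| := lt_of_mul_lt_mul_right hdα hnorm.le
    have h2 := sq_lt_sq.2 h1
    by_contra h0
    exact hα.2 (hin t (by linarith) (by nlinarith))
  have hs : 1 < s := by
    have h1 : |s - 1| < |s| := lt_of_mul_lt_mul_right hdβ hnorm.le
    have h2 := sq_lt_sq.2 h1
    by_contra h0
    exact hβ.2 (hin s (by nlinarith) (by linarith))
  have hs0 : 0 < s - 1 := by linarith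
  have hst : 0 < s - t := by linarith
  have hs00 : 0 < s := by linarith
  -- Points of the chord in terms of the parameter along the line through `p` and `q`.
  have hpt : ∀ u x : ℝ, 0 < x → t + x * s = u * (1 + x) →
      pt (p + t • (q - p)) (p + s • (q - p)) x = p + u • (q - p) := by
    intro u x hx hu
    have hx1 : 1 + x ≠ 0 := by positivity
    have e1 : u = 1 / (1 + x) * t + x / (1 + x) * s := by field_simp; linarith
    have e2 : x / (1 + x) = 1 - 1 / (1 + x) := by field_simp; ring
    unfold pt
    rw [e1, e2]
    module
  have hx0 : 0 < -t / s := div_pos (by linarith) hs00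
  have hy0 : 0 < (1 - t) / (s - 1) := div_pos (by linarith) hs0
  have hpx : pt (p + t • (q - p)) (p + s • (q - p)) (-t / s) = p := by
    rw [hpt 0 _ hx0 (by field_simp; ring)]; simp
  have hqy : pt (p + t • (q - p)) (p + s • (q - p)) ((1 - t) / (s - 1)) = q := by
    rw [hpt 1 _ hy0 (by field_simp; ring)]; simp
  refine ⟨-t / s, (1 - t) / (s - 1), ⟨hαc, hβc, ?_, exists_posOn_eq_zero hop hcv hβ.2,
    exists_posOn_eq_zero hop hcv hα.2⟩, hx0, ?_, hpx.symm, hqy.symm, ?_⟩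
  · intro x hx
    -- The point at line parameter `u` lies in the open segment from `p` to one of the ends.
    set u := (t + x * s) / (1 + x) with hu
    have hx1 : 0 < 1 + x := by positivity
    rw [hpt u x hx (by rw [hu]; field_simp)]
    have hpi : p ∈ interior Ω := by rwa [hop.interior_eq]
    have hut : t < u := by rw [hu, lt_div_iff₀ hx1]; nlinarith
    have hus : u < s := by rw [hu, div_lt_iff₀ hx1]; nlinarith
    have ht' : 0 < -t := by linarith
    rcases lt_trichotomy u 0 with h0 | h0 | h0
    · apply interior_subset
      apply hcv.openSegment_interior_closure_subset_interior hpi hαc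
      refine ⟨1 - u / t, u / t, ?_, div_pos_of_neg_of_neg h0 ht, by ring, ?_⟩
      · rw [sub_pos, div_lt_one_of_neg ht]; exact hut
      · have : u = u / t * t := (div_mul_cancel₀ u ht.ne).symm
        conv_rhs => rw [this]
        module
    · rw [h0]; simpa using hp
    · apply interior_subset
      apply hcv.openSegment_interior_closure_subset_interior hpi hβc
      refine ⟨1 - u / s, u / s, ?_, by positivity, by ring, ?_⟩
      · rw [sub_pos, div_lt_one hs00]; exact hus
      · have : u = u / s * s := by field_simp
        conv_rhs => rw [this]
        module
  · rw [div_lt_div_iff₀ hs00 hs0]; nlinarith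
  · rw [hdp, hdq, hdp, hdq, abs_of_neg ht, abs_of_neg (by linarith : t - 1 < 0),
      abs_of_pos hs00, abs_of_pos hs0]
    have : -t ≠ 0 := by linarith
    have : t ≠ 0 := ht.ne
    field_simp
    ring

theorem exists_chord {n : ℕ} {Ω : Set (Euc n)} (hop : IsOpen Ω) (hcv : Convex ℝ Ω)
    (hbd : Bornology.IsBounded Ω) {p q : Euc n} (hp : p ∈ Ω) (hq : q ∈ Ω) (hne : p ≠ q) :
    ∃ (α β : Euc n) (x y : ℝ), IsChord Ω α β ∧ 0 < x ∧ x < y ∧ p = pt α β x ∧ q = pt α β y ∧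
      hilbertExp Ω p q = y / x := by
  have hex : ∃ r : Euc n × Euc n, IsHilbertPair Ω p q r.1 r.2 := by
    obtain ⟨s, hs, hsf⟩ := exists_frontier_beyond hop hcv hbd hp hq hne
    obtain ⟨t, ht, htf⟩ := exists_frontier_beyond hop hcv hbd hq hp hne.symm
    have hnorm : 0 < ‖q - p‖ := norm_pos_iff.2 (sub_ne_zero.2 hne.symm)
    have hcol : ∀ (a b : Euc n) (u : ℝ), Collinear ℝ ({a + u • (b - a), a, b} : Set (Euc n)) := by
      intro a b u
      rw [collinear_iff_of_mem (p₀ := a) (by simp)]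
      refine ⟨b - a, fun z hz => ?_⟩
      rcases hz with rfl | rfl | rfl
      · exact ⟨u, by simp [add_comm]⟩
      · exact ⟨0, by simp⟩
      · exact ⟨1, by simp⟩
    have hlt : ∀ (a b : Euc n) (u : ℝ), 1 < u → a ≠ b →
        dist (a + u • (b - a)) b < dist (a + u • (b - a)) a := by
      intro a b u hu hab
      have hn : 0 < ‖b - a‖ := norm_pos_iff.2 (sub_ne_zero.2 hab.symm)
      have e : a + u • (b - a) - b = (u - 1) • (b - a) := by module
      rw [dist_eq_norm, dist_eq_norm, e, add_sub_cancel_left, norm_smul, norm_smul,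
        Real.norm_of_nonneg (by linarith), Real.norm_of_nonneg (by linarith)]
      nlinarith
    refine ⟨(q + t • (p - q), p + s • (q - p)), htf, hsf, ?_, hcol p q s,
      hlt q p t ht hne.symm, hlt p q s hs hne⟩
    have := hcol q p t
    rwa [Set.pair_comm q p] at this
  obtain ⟨x, y, hch, hx, hxy, hpx, hqy, hcr⟩ :=
    IsHilbertPair.chord hop hcv hp hq hne hex.choose_spec
  refine ⟨_, _, x, y, hch, hx, hxy, hpx, hqy, ?_⟩
  unfold hilbertExp hilbertDist
  rw [dif_pos hex, hcr, Real.exp_log (div_pos (hx.trans hxy) hx)]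

/-- Upper half of the max formula: no pair of positive functionals has a cross ratio exceeding
`exp d_Ω`. -/
theorem le_hilbertExp {n : ℕ} {Ω : Set (Euc n)} (hop : IsOpen Ω) (hcv : Convex ℝ Ω)
    (hbd : Bornology.IsBounded Ω) {p q : Euc n} (hp : p ∈ Ω) (hq : q ∈ Ω)
    {φ ψ : Euc n × ℝ} (hφ : PosOn Ω φ) (hψ : PosOn Ω ψ) :
    affEval φ p * affEval ψ q ≤ hilbertExp Ω p q * (affEval φ q * affEval ψ p) := by
  by_cases hne : p = q
  · subst hne; rw [hilbertExp_self, one_mul]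
  obtain ⟨α, β, x, y, hch, hx, hxy, rfl, rfl, hE⟩ := exists_chord hop hcv hbd hp hq hne
  have hy := hx.trans hxy
  rw [hE, affEval_pt _ _ _ hx, affEval_pt _ _ _ hx, affEval_pt _ _ _ hy, affEval_pt _ _ _ hy]
  have a1 := hφ.nonneg_closure hch.left_mem
  have a2 := hφ.nonneg_closure hch.right_mem
  have b1 := hψ.nonneg_closure hch.left_mem
  have b2 := hψ.nonneg_closure hch.right_mem
  set A := affEval φ α
  set B := affEval φ β
  set C := affEval ψ α
  set D := affEval ψ β
  have hyx : 0 < y - x := by linarith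
  have key : x * ((A + x * B) * (C + y * D)) ≤ y * ((A + y * B) * (C + x * D)) := by
    have e1 : 0 ≤ (y - x) * (A * C) := by positivity
    have e2 : 0 ≤ (y - x) * (B * D) * (x * y) := by positivity
    have e3 : 0 ≤ (y - x) * (B * C) * (x + y) := by positivity
    nlinarith
  have : (A + x * B) * (C + y * D) ≤ y / x * ((A + y * B) * (C + x * D)) := by
    rw [div_mul_eq_mul_div, le_div_iff₀ hx]; linarith
  rw [div_mul_div_comm, div_mul_div_comm, mul_comm (1 + y) (1 + x), mul_div_assoc']
  gcongr

/-- Lower half of the max formula: some pair of positive functionals attains `exp d_Ω`. -/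
theorem exists_eq_hilbertExp {n : ℕ} {Ω : Set (Euc n)} (hop : IsOpen Ω) (hcv : Convex ℝ Ω)
    (hbd : Bornology.IsBounded Ω) {p q : Euc n} (hp : p ∈ Ω) (hq : q ∈ Ω) :
    ∃ φ ψ : Euc n × ℝ, PosOn Ω φ ∧ PosOn Ω ψ ∧
      affEval φ p * affEval ψ q = hilbertExp Ω p q * (affEval φ q * affEval ψ p) := by
  by_cases hne : p = q
  · subst hne
    exact ⟨_, _, posOn_one Ω, posOn_one Ω, by rw [hilbertExp_self, one_mul]⟩
  obtain ⟨α, β, x, y, hch, hx, hxy, rfl, rfl, hE⟩ := exists_chord hop hcv hbd hp hq hne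
  have hy := hx.trans hxy
  obtain ⟨φ, hφ, hφ0⟩ := hch.exists_right
  obtain ⟨ψ, hψ, hψ0⟩ := hch.exists_left
  refine ⟨φ, ψ, hφ, hψ, ?_⟩
  rw [hE, affEval_pt _ _ _ hx, affEval_pt _ _ _ hx, affEval_pt _ _ _ hy, affEval_pt _ _ _ hy,
    hφ0, hψ0]
  field_simp
  ring

theorem IsChord.pos_left {n : ℕ} {Ω : Set (Euc n)} {α β : Euc n} (h : IsChord Ω α β)
    {φ : Euc n × ℝ} (hφ : PosOn Ω φ) (h0 : affEval φ β = 0) : 0 < affEval φ α := by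
  have := hφ _ (h.pt_mem 1 one_pos)
  rw [affEval_pt _ _ _ one_pos, h0] at this
  norm_num at this
  exact this

theorem IsChord.pos_right {n : ℕ} {Ω : Set (Euc n)} {α β : Euc n} (h : IsChord Ω α β)
    {φ : Euc n × ℝ} (hφ : PosOn Ω φ) (h0 : affEval φ α = 0) : 0 < affEval φ β :=
  h.symm.pos_left hφ h0

theorem hilbertExp_pos {n : ℕ} (Ω : Set (Euc n)) (p q : Euc n) : 0 < hilbertExp Ω p q :=
  Real.exp_pos _

/-- In the logarithm of the chord coordinate, the metric on a chord is the usual distance. -/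
theorem IsChord.hilbertExp_pt {n : ℕ} {Ω : Set (Euc n)} (hop : IsOpen Ω) (hcv : Convex ℝ Ω)
    (hbd : Bornology.IsBounded Ω) {α β : Euc n} (h : IsChord Ω α β) {x y : ℝ} (hx : 0 < x)
    (hy : 0 < y) : hilbertExp Ω (pt α β x) (pt α β y) = max (x / y) (y / x) := by
  have hp := h.pt_mem x hx
  have hq := h.pt_mem y hy
  obtain ⟨φ, hφ, hφ0⟩ := h.exists_right
  obtain ⟨ψ, hψ, hψ0⟩ := h.exists_left
  have hφα := h.pos_left hφ hφ0
  have hψβ := h.pos_right hψ hψ0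
  apply le_antisymm
  · obtain ⟨χ, ω, hχ, hω, he⟩ := exists_eq_hilbertExp hop hcv hbd hp hq
    have p1 := hχ _ hp
    have p2 := hχ _ hq
    have p3 := hω _ hp
    have p4 := hω _ hq
    rw [affEval_pt _ _ _ hx] at p1 p3 he
    rw [affEval_pt _ _ _ hy] at p2 p4 he
    have a1 := hχ.nonneg_closure h.left_mem
    have a2 := hχ.nonneg_closure h.right_mem
    have b1 := hω.nonneg_closure h.left_mem
    have b2 := hω.nonneg_closure h.right_mem
    rw [affEval_pt _ _ _ hx, affEval_pt _ _ _ hy] at he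
    set A := affEval χ α
    set B := affEval χ β
    set C := affEval ω α
    set D := affEval ω β
    rw [div_pos_iff_of_pos_right (by positivity)] at p1 p2 p3 p4
    have he' : hilbertExp Ω (pt α β x) (pt α β y) =
        ((A + x * B) * (C + y * D)) / ((A + y * B) * (C + x * D)) := by
      rw [eq_div_iff (by positivity)]
      field_simp at he
      linarith
    rw [he', div_le_iff₀ (by positivity)]
    rcases le_total x y with hxy | hxy
    · have hyx : 0 ≤ y - x := by linarith
      have e1 : 0 ≤ (y - x) * (A * C) := by positivity
      have e2 : 0 ≤ (y - x) * (B * D) * (x * y) := by positivity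
      have e3 : 0 ≤ (y - x) * (B * C) * (x + y) := by positivity
      refine le_trans ?_ (mul_le_mul_of_nonneg_right (le_max_right _ _) (by positivity))
      rw [div_mul_eq_mul_div, le_div_iff₀ hx]
      nlinarith
    · have hyx : 0 ≤ x - y := by linarith
      have e1 : 0 ≤ (x - y) * (A * C) := by positivity
      have e2 : 0 ≤ (x - y) * (B * D) * (x * y) := by positivity
      have e3 : 0 ≤ (x - y) * (A * D) * (x + y) := by positivity
      refine le_trans ?_ (mul_le_mul_of_nonneg_right (le_max_left _ _) (by positivity))
      rw [div_mul_eq_mul_div, le_div_iff₀ hy]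
      nlinarith
  · apply max_le
    · have := le_hilbertExp hop hcv hbd hp hq hψ hφ
      rw [affEval_pt _ _ _ hx, affEval_pt _ _ _ hx, affEval_pt _ _ _ hy, affEval_pt _ _ _ hy,
        hφ0, hψ0] at this
      field_simp at this
      simp only [zero_mul, add_zero, zero_add] at this
      rw [div_le_iff₀ hy]
      refine le_of_mul_le_mul_right ?_ (mul_pos hφα hψβ)
      linarith
    · have := le_hilbertExp hop hcv hbd hp hq hφ hψ
      rw [affEval_pt _ _ _ hx, affEval_pt _ _ _ hx, affEval_pt _ _ _ hy, affEval_pt _ _ _ hy,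
        hφ0, hψ0] at this
      field_simp at this
      simp only [mul_zero, zero_mul, add_zero, zero_add] at this
      rw [div_le_iff₀ hx]
      refine le_of_mul_le_mul_right ?_ (mul_pos hφα hψβ)
      linarith

/-! ### Vertex lines of a cone -/

theorem openSegment_eq_pt {n : ℕ} (α β : Euc n) :
    openSegment ℝ α β = {z | ∃ x : ℝ, 0 < x ∧ z = pt α β x} := by
  ext z
  constructor
  · rintro ⟨a, b, ha, hb, hab, rfl⟩
    refine ⟨b / a, div_pos hb ha, ?_⟩
    have e : 1 + b / a = 1 / a := by field_simp; linarith
    unfold pt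
    rw [e]
    congr 2 <;> field_simp
  · rintro ⟨x, hx, rfl⟩
    have h1 : 1 + x ≠ 0 := by positivity
    exact ⟨1 / (1 + x), x / (1 + x), by positivity, by positivity, by field_simp, rfl⟩

/-- The consequences of the cone structure used below: the lines from the vertex `v` to the
base `B` are chords covering `Ω`; some positive functional vanishes on all of `B`; and the
positive functionals vanishing at `v` contain one together with small perturbations of it in
every direction. -/
structure ConeFacts {n : ℕ} (Ω : Set (Euc n)) (v : Euc n) (B : Set (Euc n)) : Prop where
  chord : ∀ b ∈ B, IsChord Ω v b
  cover : ∀ z ∈ Ω, ∃ b ∈ B, ∃ x : ℝ, 0 < x ∧ z = pt v b x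
  base : ∃ φ, PosOn Ω φ ∧ ∀ b ∈ B, affEval φ b = 0
  vertex : ∃ ψ, PosOn Ω ψ ∧ affEval ψ v = 0 ∧
    ∀ w : Euc n, ∃ ε : ℝ, 0 < ε ∧ PosOn Ω (ψ + ε • (w, -inner ℝ w v))

theorem IsConeWith.facts {n : ℕ} {Ω B : Set (Euc n)} {v : Euc n} (h : IsConeWith Ω v B) :
    ConeFacts Ω v B := by
  obtain ⟨f, c, -, hB, hv, -, -, hbd, -, -, hΩ⟩ := h
  have hmem : ∀ z, z ∈ Ω ↔ ∃ b ∈ B, ∃ x : ℝ, 0 < x ∧ z = pt v b x := by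
    intro z
    rw [hΩ]
    simp only [mem_iUnion, openSegment_eq_pt, mem_ofPred_eq, exists_prop]
  have hκ : c - f v ≠ 0 := sub_ne_zero.2 (Ne.symm hv)
  set g : Euc n := (InnerProductSpace.toDual ℝ (Euc n)).symm (LinearMap.toContinuousLinearMap f)
    with hg
  have hgz : ∀ z, inner ℝ g z = f z := by
    intro z; rw [hg, InnerProductSpace.toDual_symm_apply]; rfl
  set φ : Euc n × ℝ := (c - f v)⁻¹ • (-g, c) with hφ
  set ψ : Euc n × ℝ := (c - f v)⁻¹ • (g, -f v) with hψ
  have hφz : ∀ z, affEval φ z = (c - f v)⁻¹ * (c - f z) := by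
    intro z
    rw [hφ, affEval_smul]; unfold affEval; rw [inner_neg_left, hgz]; ring
  have hψz : ∀ z, affEval ψ z = (c - f v)⁻¹ * (f z - f v) := by
    intro z
    rw [hψ, affEval_smul]; unfold affEval; rw [hgz]; ring
  have hφB : ∀ b ∈ B, affEval φ b = 0 := by
    intro b hb; rw [hφz, hB b hb]; ring
  have hφv : affEval φ v = 1 := by rw [hφz]; field_simp
  have hψv : affEval ψ v = 0 := by rw [hψz]; ring
  have hψB : ∀ b ∈ B, affEval ψ b = 1 := by
    intro b hb; rw [hψz, hB b hb]; field_simp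
  have hφpos : PosOn Ω φ := by
    intro z hz
    obtain ⟨b, hb, x, hx, rfl⟩ := (hmem z).1 hz
    rw [affEval_pt _ _ _ hx, hφv, hφB b hb]
    positivity
  have hψpos : PosOn Ω ψ := by
    intro z hz
    obtain ⟨b, hb, x, hx, rfl⟩ := (hmem z).1 hz
    rw [affEval_pt _ _ _ hx, hψv, hψB b hb]
    positivity
  have hseg : ∀ b ∈ B, openSegment ℝ v b ⊆ Ω := by
    intro b hb
    rw [hΩ]
    exact subset_biUnion_of_mem (u := fun b => openSegment ℝ v b) hb
  refine ⟨fun b hb => ⟨?_, ?_, fun x hx => (hmem _).2 ⟨b, hb, x, hx, rfl⟩,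
    ⟨φ, hφpos, hφB b hb⟩, ⟨ψ, hψpos, hψv⟩⟩, fun z hz => (hmem z).1 hz, ⟨φ, hφpos, hφB⟩,
    ⟨ψ, hψpos, hψv, fun w => ?_⟩⟩
  · exact closure_mono (hseg b hb) (segment_subset_closure_openSegment (left_mem_segment ℝ v b))
  · exact closure_mono (hseg b hb) (segment_subset_closure_openSegment (right_mem_segment ℝ v b))
  · obtain ⟨R, hR⟩ := isBounded_iff_forall_norm_le.1 hbd
    set M := ‖w‖ * (|R| + ‖v‖) with hM
    have hM0 : 0 ≤ M := by positivity
    refine ⟨1 / (M + 1), by positivity, fun z hz => ?_⟩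
    obtain ⟨b, hb, x, hx, rfl⟩ := (hmem z).1 hz
    have h1 : affEval (w, -inner ℝ w v) v = 0 := by unfold affEval; ring
    have h2 : -M ≤ affEval (w, -inner ℝ w v) b := by
      have e : affEval (w, -inner ℝ w v) b = inner ℝ w (b - v) := by
        unfold affEval; rw [inner_sub_right]; ring
      have e1 := abs_real_inner_le_norm w (b - v)
      have e2 : ‖b - v‖ ≤ |R| + ‖v‖ :=
        (norm_sub_le _ _).trans (by have := hR b hb; have := le_abs_self R; linarith)
      have e3 : ‖w‖ * ‖b - v‖ ≤ M := by rw [hM]; gcongr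
      rw [e]
      have := neg_abs_le (inner ℝ w (b - v))
      linarith
    rw [affEval_add, affEval_smul (1 / (M + 1)), affEval_pt ψ _ _ hx, affEval_pt _ _ _ hx, hψv,
      hψB b hb, h1]
    have h3 : 0 < 1 + 1 / (M + 1) * affEval (w, -inner ℝ w v) b := by
      have : 1 / (M + 1) * (-M) ≤ 1 / (M + 1) * affEval (w, -inner ℝ w v) b := by gcongr
      have : 1 / (M + 1) * (-M) = -1 + 1 / (M + 1) := by field_simp; ring
      have : 0 < 1 / (M + 1) := by positivity
      linarith
    have : (0 + x * 1) / (1 + x) + 1 / (M + 1) *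
        ((0 + x * affEval (w, -inner ℝ w v) b) / (1 + x)) =
        x * (1 + 1 / (M + 1) * affEval (w, -inner ℝ w v) b) / (1 + x) := by
      field_simp
      ring
    rw [this]
    positivity

/-- Vertex lines are rigid: a point of `Ω` metrically between two points of a vertex line lies
on that line. Comparing `φ(·)/ψ(·)` for the base functional `φ` and all `ψ` vanishing at the
vertex shows that these `ψ` are proportional at the two points. -/
theorem ConeFacts.rigid {n : ℕ} {Ω B : Set (Euc n)} {v : Euc n} (hC : ConeFacts Ω v B)
    (hop : IsOpen Ω) (hcv : Convex ℝ Ω) (hbd : Bornology.IsBounded Ω) {b : Euc n} (hb : b ∈ B)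
    {x y : ℝ} (hx : 0 < x) (hxy : x < y) {z : Euc n} (hz : z ∈ Ω)
    (h : hilbertExp Ω (pt v b x) z * hilbertExp Ω z (pt v b y) =
      hilbertExp Ω (pt v b x) (pt v b y)) :
    ∃ w : ℝ, 0 < w ∧ z = pt v b w := by
  have hy := hx.trans hxy
  have hch := hC.chord b hb
  have hp := hch.pt_mem x hx
  have hq := hch.pt_mem y hy
  obtain ⟨φ, hφ, hφB⟩ := hC.base
  obtain ⟨ψ₀, hψ₀, hψ₀v, hpert⟩ := hC.vertex
  have hφv := hch.pos_left hφ (hφB b hb)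
  rw [hch.hilbertExp_pt hop hcv hbd hx hy] at h
  have hmax : max (x / y) (y / x) = y / x := by
    apply max_eq_right
    rw [div_le_div_iff₀ hy hx]; nlinarith
  rw [hmax] at h
  have hcmp : ∀ ψ ψ', PosOn Ω ψ → PosOn Ω ψ' → affEval ψ v = 0 → affEval ψ' v = 0 →
      affEval ψ z * affEval ψ' (pt v b x) ≤ affEval ψ' z * affEval ψ (pt v b x) := by
    intro ψ ψ' hψ hψ' hψv hψ'v
    have u1 := le_hilbertExp hop hcv hbd hp hz hφ hψ
    have u2 := le_hilbertExp hop hcv hbd hz hq hφ hψ'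
    have e : y / x * (affEval φ (pt v b y) * affEval ψ' (pt v b x)) =
        affEval φ (pt v b x) * affEval ψ' (pt v b y) := by
      rw [affEval_pt _ _ _ hx, affEval_pt _ _ _ hx, affEval_pt _ _ _ hy, affEval_pt _ _ _ hy,
        hφB b hb, hψ'v]
      field_simp
      ring
    have pφp := hφ _ hp
    have pφq := hφ _ hq
    have pφz := hφ _ hz
    have pψp := hψ _ hp
    have pψz := hψ _ hz
    have pψ'p := hψ' _ hp
    have pψ'q := hψ' _ hq
    have pψ'z := hψ' _ hz
    have hm := mul_le_mul u1 u2 (by positivity)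
      (by have := hilbertExp_pos Ω (pt v b x) z; positivity)
    have hm' : affEval φ (pt v b x) * affEval ψ z * (affEval φ z * affEval ψ' (pt v b y)) ≤
        y / x * (affEval φ z * affEval ψ (pt v b x) *
          (affEval φ (pt v b y) * affEval ψ' z)) := by
      rw [← h]; linarith
    have hm'' := mul_le_mul_of_nonneg_right hm' pψ'p.le
    refine le_of_mul_le_mul_left ?_
      (mul_pos (mul_pos pφp pφz) pψ'q)
    calc affEval φ (pt v b x) * affEval φ z * affEval ψ' (pt v b y) *
          (affEval ψ z * affEval ψ' (pt v b x))
        = affEval φ (pt v b x) * affEval ψ z * (affEval φ z * affEval ψ' (pt v b y)) *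
          affEval ψ' (pt v b x) := by ring
      _ ≤ _ := hm''
      _ = (y / x * (affEval φ (pt v b y) * affEval ψ' (pt v b x))) *
          (affEval φ z * affEval ψ (pt v b x) * affEval ψ' z) := by ring
      _ = _ := by rw [e]; ring
  have hvec : affEval ψ₀ z • (pt v b x - v) = affEval ψ₀ (pt v b x) • (z - v) := by
    apply ext_inner_left ℝ
    intro w
    obtain ⟨ε, hε, hψw⟩ := hpert w
    have hv0 : affEval (ψ₀ + ε • (w, -inner ℝ w v)) v = 0 := by
      rw [affEval_add, affEval_smul, hψ₀v]; unfold affEval; ring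
    have e := le_antisymm (hcmp _ _ hψ₀ hψw hψ₀v hv0) (hcmp _ _ hψw hψ₀ hv0 hψ₀v)
    rw [affEval_add, affEval_add, affEval_smul, affEval_smul] at e
    have e2 : ∀ u, affEval (w, -inner ℝ w v) u = inner ℝ w (u - v) := by
      intro u; unfold affEval; rw [inner_sub_right]; ring
    rw [e2, e2] at e
    rw [inner_smul_right, inner_smul_right]
    apply mul_left_cancel₀ hε.ne'
    linarith
  obtain ⟨c, hc, u, hu, hzu⟩ := hC.cover z hz
  have hψz := hψ₀ _ hz
  have hψp := hψ₀ _ hp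
  have hsub : ∀ (β : Euc n) (t : ℝ), 0 < t → pt v β t - v = (t / (1 + t)) • (β - v) := by
    intro β t ht
    have : 1 / (1 + t) = 1 - t / (1 + t) := by field_simp; ring
    unfold pt
    rw [this]
    module
  have hzv : z - v = (u / (1 + u)) • (c - v) := by rw [hzu, hsub c u hu]
  rw [hzv, hsub b x hx, smul_smul, smul_smul] at hvec
  -- `c` lies on the ray from `v` through `b`; both lie on the base hyperplane, so `c = b`.
  set m := affEval ψ₀ (pt v b x) * (u / (1 + u)) with hm
  set m' := affEval ψ₀ z * (x / (1 + x))
  have hm0 : 0 < m := by positivity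
  have hcb : c = (1 - m' / m) • v + (m' / m) • b := by
    have : c - v = (m' / m) • (b - v) := by
      rw [div_eq_inv_mul, mul_smul, hvec, smul_smul, inv_mul_cancel₀ hm0.ne', one_smul]
    rw [← sub_add_cancel c v, this]
    module
  have h0 := hφB c hc
  rw [hcb, affEval_comb φ v b (by ring), hφB b hb, mul_zero, add_zero] at h0
  have hl : 1 - m' / m = 0 := by
    rcases mul_eq_zero.1 h0 with h | h
    · exact h
    · exact absurd h hφv.ne'
  have hl' : m' / m = 1 := by linarith
  rw [hl, hl', zero_smul, one_smul, zero_add] at hcb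
  exact ⟨u, hu, by rw [hzu, hcb]⟩

/-- The maximal ratio between two base points of functionals vanishing at the vertex; it bounds
the ratio for every positive functional. -/
theorem ConeFacts.exists_ratio {n : ℕ} {Ω B : Set (Euc n)} {v : Euc n} (hC : ConeFacts Ω v B)
    (hop : IsOpen Ω) {b c : Euc n} (hb : b ∈ B) (hc : c ∈ B) :
    ∃ a : ℝ, 0 < a ∧ (∃ φ, PosOn Ω φ ∧ affEval φ v = 0 ∧ affEval φ b = a * affEval φ c) ∧
      ∀ χ, PosOn Ω χ → affEval χ b ≤ a * affEval χ c := by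
  have hchb := hC.chord b hb
  have hchc := hC.chord c hc
  have hp := hchb.pt_mem 1 one_pos
  set p₀ := pt v b 1 with hp₀
  have hcomp : IsCompact (normalized Ω p₀ ∩ {w | affEval w v = 0}) :=
    (isCompact_normalized hop hp).inter_right
      (isClosed_eq (continuous_affEval_left v) continuous_const)
  have hne : (normalized Ω p₀ ∩ {w | affEval w v = 0}).Nonempty := by
    obtain ⟨ψ, hψ, hψv⟩ := hchb.exists_left
    refine ⟨_, hψ.normalize hp, ?_⟩
    rw [mem_ofPred_eq, affEval_smul, hψv, mul_zero]
  have hpos : ∀ w ∈ normalized Ω p₀ ∩ {w | affEval w v = 0}, 0 < affEval w c := fun w hw =>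
    hchc.pos_right (posOn_of_normalized hop hw.1) hw.2
  obtain ⟨φ, hφ, hmax⟩ := hcomp.exists_isMaxOn hne
    (f := fun w => affEval w b / affEval w c)
    (((continuous_affEval_left b).continuousOn).div (continuous_affEval_left c).continuousOn
      fun w hw => (hpos w hw).ne')
  have hφpos := posOn_of_normalized hop hφ.1
  have hφc := hpos φ hφ
  have hφb := hchb.pos_right hφpos hφ.2
  refine ⟨affEval φ b / affEval φ c, div_pos hφb hφc, ⟨φ, hφpos, hφ.2, by field_simp⟩, ?_⟩
  intro χ hχ
  obtain ⟨φ₀, hφ₀, hφ₀B⟩ := hC.base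
  have hφ₀v := hchb.pos_left hφ₀ (hφ₀B b hb)
  -- Subtracting a multiple of the base functional makes `χ` vanish at the vertex.
  set k := affEval χ v / affEval φ₀ v with hk
  set χ' := χ + (-k) • φ₀ with hχ'
  have hχ'B : ∀ d ∈ B, affEval χ' d = affEval χ d := by
    intro d hd; rw [hχ', affEval_add, affEval_smul, hφ₀B d hd]; ring
  have hχ'v : affEval χ' v = 0 := by
    rw [hχ', affEval_add, affEval_smul, hk]; field_simp; ring
  have hχB : ∀ d ∈ B, 0 ≤ affEval χ d := fun d hd =>
    hχ.nonneg_closure (hC.chord d hd).right_mem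
  have hb0 := hχB b hb
  rcases hb0.eq_or_lt with h0 | h0
  · rw [← h0]
    have := hχB c hc
    positivity
  have hχ'p : affEval χ' p₀ = affEval χ b / 2 := by
    rw [hp₀, affEval_pt _ _ _ one_pos, hχ'v, hχ'B b hb]; ring
  have hnorm : (affEval χ' p₀)⁻¹ • χ' ∈ normalized Ω p₀ ∩ {w | affEval w v = 0} := by
    have hpp : 0 < affEval χ' p₀ := by rw [hχ'p]; positivity
    refine ⟨⟨fun z hz => ?_, by rw [affEval_smul, inv_mul_cancel₀ hpp.ne']⟩, ?_⟩
    · obtain ⟨d, hd, x, hx, rfl⟩ := hC.cover z hz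
      have := hχB d hd
      rw [affEval_smul, affEval_pt _ _ _ hx, hχ'v, hχ'B d hd]
      positivity
    · rw [mem_ofPred_eq, affEval_smul, hχ'v, mul_zero]
  have h1 := hmax hnorm
  have h2 := hpos _ hnorm
  simp only [mem_ofPred_eq] at h1
  rw [div_le_iff₀ h2, affEval_smul, affEval_smul, hχ'B b hb, hχ'B c hc] at h1
  have hpp : 0 < (affEval χ' p₀)⁻¹ := by rw [hχ'p]; positivity
  refine le_of_mul_le_mul_left ?_ hpp
  linarith

/-- The distance between points of two vertex lines depends only on the ratio of their
coordinates, through an explicit function. -/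
theorem ConeFacts.exists_dist_formula {n : ℕ} {Ω B : Set (Euc n)} {v : Euc n}
    (hC : ConeFacts Ω v B) (hop : IsOpen Ω) (hcv : Convex ℝ Ω) (hbd : Bornology.IsBounded Ω)
    {b c : Euc n} (hb : b ∈ B) (hc : c ∈ B) :
    ∃ A A' : ℝ, 0 < A ∧ 0 < A' ∧ ∀ x y : ℝ, 0 < x → 0 < y →
      hilbertExp Ω (pt v b x) (pt v c y) = max 1 (A * (x / y)) * max 1 (A' * (y / x)) := by
  obtain ⟨A, hA, ⟨φ, hφ, hφv, hφA⟩, hAle⟩ := hC.exists_ratio hop hb hc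
  obtain ⟨A', hA', ⟨ψ, hψ, hψv, hψA⟩, hA'le⟩ := hC.exists_ratio hop hc hb
  obtain ⟨φ₀, hφ₀, hφ₀B⟩ := hC.base
  refine ⟨A, A', hA, hA', fun x y hx hy => ?_⟩
  have hchb := hC.chord b hb
  have hchc := hC.chord c hc
  have hp := hchb.pt_mem x hx
  have hq := hchc.pt_mem y hy
  apply le_antisymm
  · obtain ⟨χ, ω, hχ, hω, he⟩ := exists_eq_hilbertExp hop hcv hbd hp hq
    have up : ∀ (A x y V b c : ℝ), 0 < A → 0 < x → 0 < y → 0 ≤ V → 0 ≤ c → b ≤ A * c →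
        V + x * b ≤ max 1 (A * (x / y)) * (V + y * c) := by
      intro A x y V b c hA hx hy hV hc hbc
      have h1 : V ≤ max 1 (A * (x / y)) * V := le_mul_of_one_le_left hV (le_max_left _ _)
      have h2 : A * (x / y) * (y * c) ≤ max 1 (A * (x / y)) * (y * c) :=
        mul_le_mul_of_nonneg_right (le_max_right _ _) (by positivity)
      have h3 : A * (x / y) * (y * c) = x * (A * c) := by field_simp
      have h4 : x * b ≤ x * (A * c) := by gcongr
      linarith
    have u1 := up A x y _ _ _ hA hx hy (hχ.nonneg_closure hchb.left_mem)
      (hχ.nonneg_closure hchc.right_mem) (hAle χ hχ)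
    have u2 := up A' y x _ _ _ hA' hy hx (hω.nonneg_closure hchb.left_mem)
      (hω.nonneg_closure hchb.right_mem) (hA'le ω hω)
    have p2 := hχ _ hq
    have p3 := hω _ hp
    have p4 := hω _ hq
    rw [affEval_pt χ v b hx, affEval_pt ω v b hx, affEval_pt χ v c hy, affEval_pt ω v c hy] at he
    rw [affEval_pt _ _ _ hx] at p3
    rw [affEval_pt _ _ _ hy] at p2 p4
    rw [div_pos_iff_of_pos_right (by positivity)] at p2 p3 p4
    refine le_of_mul_le_mul_right ?_ (mul_pos p2 p3)
    have he' : hilbertExp Ω (pt v b x) (pt v c y) *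
        ((affEval χ v + y * affEval χ c) * (affEval ω v + x * affEval ω b)) =
        (affEval χ v + x * affEval χ b) * (affEval ω v + y * affEval ω c) := by
      field_simp at he
      linarith
    rw [he']
    have := mul_le_mul u1 u2 p4.le (by positivity)
    linarith
  · have low : ∀ (φ ψ : Euc n × ℝ) (m m' : ℝ), PosOn Ω φ → PosOn Ω ψ →
        affEval φ v + x * affEval φ b = m * (affEval φ v + y * affEval φ c) →
        affEval ψ v + y * affEval ψ c = m' * (affEval ψ v + x * affEval ψ b) →
        m * m' ≤ hilbertExp Ω (pt v b x) (pt v c y) := by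
      intro φ ψ m m' hφ hψ h1 h2
      have h3 := le_hilbertExp hop hcv hbd hp hq hφ hψ
      have p2 := hφ _ hq
      have p3 := hψ _ hp
      rw [affEval_pt _ _ _ hx] at p3
      rw [affEval_pt _ _ _ hy] at p2
      rw [affEval_pt φ v b hx, affEval_pt ψ v b hx, affEval_pt φ v c hy, affEval_pt ψ v c hy,
        h1, h2] at h3
      refine le_of_mul_le_mul_right ?_ (mul_pos p2 p3)
      refine le_trans (le_of_eq ?_) h3
      ring
    have f0 : affEval φ₀ v + x * affEval φ₀ b = 1 * (affEval φ₀ v + y * affEval φ₀ c) := by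
      rw [hφ₀B b hb, hφ₀B c hc]; ring
    have f1 : affEval φ v + x * affEval φ b = A * (x / y) * (affEval φ v + y * affEval φ c) := by
      rw [hφv, hφA]; field_simp; ring
    have g0 : affEval φ₀ v + y * affEval φ₀ c = 1 * (affEval φ₀ v + x * affEval φ₀ b) := by
      rw [hφ₀B b hb, hφ₀B c hc]; ring
    have g1 : affEval ψ v + y * affEval ψ c = A' * (y / x) * (affEval ψ v + x * affEval ψ b) := by
      rw [hψv, hψA]; field_simp; ring
    rcases max_choice 1 (A * (x / y)) with h1 | h1 <;>
      rcases max_choice 1 (A' * (y / x)) with h2 | h2 <;> rw [h1, h2]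
    · exact low _ _ _ _ hφ₀ hφ₀ f0 g0
    · exact low _ _ _ _ hφ₀ hψ f0 g1
    · exact low _ _ _ _ hφ hφ₀ f1 g0
    · exact low _ _ _ _ hφ hψ f1 g1

/-! ### Images of vertex lines -/

theorem max_ratio_eq {a b c : ℝ} (ha : 0 < a) (hb : 0 < b) (hc : 0 < c)
    (h : max (c / a) (a / c) = max (c / b) (b / c)) : a = b ∨ a * b = c * c := by
  rcases max_choice (c / a) (a / c) with h1 | h1 <;>
    rcases max_choice (c / b) (b / c) with h2 | h2 <;> rw [h1, h2] at h <;>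
    rw [div_eq_div_iff (by positivity) (by positivity)] at h
  · exact Or.inl (mul_left_cancel₀ hc.ne' h.symm)
  · exact Or.inr (by linarith)
  · exact Or.inr (by linarith)
  · exact Or.inl (mul_right_cancel₀ hc.ne' h)

theorem pt_eq_comb {n : ℕ} (α β : Euc n) {x : ℝ} (hx : 0 < x) :
    pt α β x = (1 - x / (1 + x)) • α + (x / (1 + x)) • β := by
  have : 1 - x / (1 + x) = 1 / (1 + x) := by field_simp; ring
  rw [this]; rfl

theorem hilbertExp_eq_of_isometry {n : ℕ} {Ω Ω' : Set (Euc n)} {τ : Euc n → Euc n}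
    (hτ : IsHilbertIsometry Ω Ω' τ) {p q : Euc n} (hp : p ∈ Ω) (hq : q ∈ Ω) :
    hilbertExp Ω' (τ p) (τ q) = hilbertExp Ω p q := by
  unfold hilbertExp; rw [hτ.2.2 p hp q hq]

/-- Any three points of a vertex line are mapped into a common chord, where the chord coordinate
is proportional to the coordinate on the vertex line. -/
theorem exists_chord_three {n : ℕ} {Ω Ω' B : Set (Euc n)} {v : Euc n}
    (hop : IsOpen Ω) (hbd : Bornology.IsBounded Ω) (hcv : Convex ℝ Ω)
    (hop' : IsOpen Ω') (hbd' : Bornology.IsBounded Ω') (hcv' : Convex ℝ Ω')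
    {τ : Euc n → Euc n} (hτ : IsHilbertIsometry Ω Ω' τ) (hC : ConeFacts Ω v B)
    {b : Euc n} (hb : b ∈ B) {x w y : ℝ} (hx : 0 < x) (hxw : x < w) (hwy : w < y) :
    ∃ (α β : Euc n) (k : ℝ), IsChord Ω' α β ∧ 0 < k ∧ τ (pt v b x) = pt α β (k * x) ∧
      τ (pt v b w) = pt α β (k * w) ∧ τ (pt v b y) = pt α β (k * y) := by
  have hch := hC.chord b hb
  have hw := hx.trans hxw
  have hy := hw.trans hwy
  have hxy := hxw.trans hwy
  have hp := hch.pt_mem x hx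
  have hq := hch.pt_mem y hy
  have hmax : ∀ s t : ℝ, 0 < s → s < t → max (s / t) (t / s) = t / s := by
    intro s t hs hst
    apply max_eq_right
    rw [div_le_div_iff₀ (hs.trans hst) hs]; nlinarith
  have hD := hilbertExp_eq_of_isometry hτ hp hq
  have hD0 := hch.hilbertExp_pt hop hcv hbd hx hy
  rw [hmax x y hx hxy] at hD0
  have hne : τ (pt v b x) ≠ τ (pt v b y) := by
    intro h
    rw [h, hilbertExp_self, hD0, eq_div_iff hx.ne'] at hD
    linarith
  obtain ⟨α, β, x', y', hch', hx', hxy', hTx, hTy, hE⟩ :=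
    exists_chord hop' hcv' hbd' (hτ.1 hp) (hτ.1 hq) hne
  have hyx : y' / x' = y / x := by rw [← hE, hD, hD0]
  have hk : 0 < x' / x := div_pos hx' hx
  have hxk : x' = x' / x * x := by field_simp
  have hyk : y' = x' / x * y := by
    field_simp
    rw [div_eq_div_iff hx'.ne' hx.ne'] at hyx
    linarith
  set k := x' / x
  refine ⟨α, β, k, hch', hk, by rw [hTx, ← hxk], ?_, by rw [hTy, ← hyk]⟩
  have hkw : 0 < k * w := by positivity
  obtain ⟨z, hz, hzw⟩ := hτ.2.1 (hch'.pt_mem (k * w) hkw)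
  have h1 : hilbertExp Ω (pt v b x) z = w / x := by
    rw [← hilbertExp_eq_of_isometry hτ hp hz, hzw, hTx,
      hch'.hilbertExp_pt hop' hcv' hbd' hx' hkw, hmax _ _ hx' (by rw [hxk]; gcongr), hxk]
    field_simp
  have h2 : hilbertExp Ω z (pt v b y) = y / w := by
    rw [← hilbertExp_eq_of_isometry hτ hz hq, hzw, hTy,
      hch'.hilbertExp_pt hop' hcv' hbd' hkw (hx'.trans hxy'),
      hmax _ _ hkw (by rw [hyk]; gcongr), hyk]
    field_simp
  obtain ⟨u, hu, rfl⟩ := hC.rigid hop hcv hbd hb hx hxy hz (by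
    rw [h1, h2, hD0]; field_simp)
  rw [hch.hilbertExp_pt hop hcv hbd hx hu] at h1
  rw [hch.hilbertExp_pt hop hcv hbd hu hy] at h2
  have huw : u = w := by
    apply le_antisymm
    · have := h1 ▸ le_max_right (x / u) (u / x)
      rwa [div_le_div_iff_of_pos_right hx] at this
    · have := h2 ▸ le_max_right (u / y) (y / u)
      rwa [div_le_div_iff_of_pos_left hy hu hw] at this
  rw [← huw, hzw, huw]

/-- An isometry maps each vertex line onto a line, affinely in the logarithmic coordinate. -/
theorem exists_chord_image {n : ℕ} {Ω Ω' B : Set (Euc n)} {v : Euc n}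
    (hop : IsOpen Ω) (hbd : Bornology.IsBounded Ω) (hcv : Convex ℝ Ω)
    (hop' : IsOpen Ω') (hbd' : Bornology.IsBounded Ω') (hcv' : Convex ℝ Ω')
    {τ : Euc n → Euc n} (hτ : IsHilbertIsometry Ω Ω' τ) (hC : ConeFacts Ω v B)
    {b : Euc n} (hb : b ∈ B) :
    ∃ (α β : Euc n) (k : ℝ), IsChord Ω' α β ∧ 0 < k ∧
      ∀ w : ℝ, 0 < w → τ (pt v b w) = pt α β (k * w) := by
  have hch := hC.chord b hb
  obtain ⟨α, β, k, hch', hk, hT1, hT2, -⟩ := exists_chord_three hop hbd hcv hop' hbd' hcv' hτ hC hb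
    one_pos one_lt_two (show (2 : ℝ) < 3 by norm_num)
  refine ⟨α, β, k, hch', hk, fun w hw => ?_⟩
  by_cases hw1 : w = 1
  · rw [hw1, hT1]
  by_cases hw2 : w = 2
  · rw [hw2, hT2]
  obtain ⟨α', β', k', -, hk', h1, h2, h3⟩ : ∃ (α' β' : Euc n) (k' : ℝ), IsChord Ω' α' β' ∧
      0 < k' ∧ τ (pt v b 1) = pt α' β' (k' * 1) ∧ τ (pt v b 2) = pt α' β' (k' * 2) ∧
      τ (pt v b w) = pt α' β' (k' * w) := by
    rcases lt_or_gt_of_ne hw1 with h | h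
    · obtain ⟨α', β', k', h0, hk', h1, h2, h3⟩ := exists_chord_three hop hbd hcv hop' hbd' hcv'
        hτ hC hb hw h one_lt_two
      exact ⟨α', β', k', h0, hk', h2, h3, h1⟩
    rcases lt_or_gt_of_ne hw2 with h' | h'
    · obtain ⟨α', β', k', h0, hk', h1, h2, h3⟩ := exists_chord_three hop hbd hcv hop' hbd' hcv'
        hτ hC hb one_pos h h'
      exact ⟨α', β', k', h0, hk', h1, h3, h2⟩
    · obtain ⟨α', β', k', h0, hk', h1, h2, h3⟩ := exists_chord_three hop hbd hcv hop' hbd' hcv'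
        hτ hC hb one_pos one_lt_two h'
      exact ⟨α', β', k', h0, hk', h1, h2, h3⟩
  -- Hence the image of the third point is on the straight line through the first two images.
  obtain ⟨μ, hμ⟩ : ∃ μ : ℝ, τ (pt v b w) = (1 - μ) • α + μ • β := by
    rw [hT1, pt_eq_comb _ _ (by positivity), pt_eq_comb _ _ (by positivity)] at h1
    rw [hT2, pt_eq_comb _ _ (by positivity), pt_eq_comb _ _ (by positivity)] at h2
    rw [pt_eq_comb α' β' (by positivity)] at h3
    have hmono : ∀ s t : ℝ, 0 < s → s < t → s / (1 + s) < t / (1 + t) := by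
      intro s t hs hst
      rw [div_lt_div_iff₀ (by positivity) (by linarith)]; nlinarith
    have hlt := hmono (k' * 1) (k' * 2) (by positivity) (by linarith)
    set a := k' * 1 / (1 + k' * 1)
    set c := k' * 2 / (1 + k' * 2)
    set d := k' * w / (1 + k' * w)
    set a' := k * 1 / (1 + k * 1)
    set c' := k * 2 / (1 + k * 2)
    have hca : c - a ≠ 0 := by linarith
    set l := (d - a) / (c - a) with hl
    have hd : d = a + l * (c - a) := by rw [hl]; field_simp; ring
    refine ⟨a' + l * (c' - a'), ?_⟩
    have e1 : τ (pt v b w) = (1 - l) • ((1 - a) • α' + a • β') + l • ((1 - c) • α' + c • β') := by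
      rw [h3, hd]; module
    rw [e1, ← h1, ← h2]
    module
  have hTw : τ (pt v b w) ∈ Ω' := hτ.1 (hch.pt_mem w hw)
  obtain ⟨φ, hφ, hφ0⟩ := hch'.exists_right
  obtain ⟨ψ, hψ, hψ0⟩ := hch'.exists_left
  have hφα := hch'.pos_left hφ hφ0
  have hψβ := hch'.pos_right hψ hψ0
  have hμ1 : 0 < 1 - μ := by
    have := hφ _ hTw
    rw [hμ, affEval_comb _ _ _ (by ring), hφ0, mul_zero, add_zero] at this
    exact pos_of_mul_pos_left this hφα.le
  have hμ0 : 0 < μ := by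
    have := hψ _ hTw
    rw [hμ, affEval_comb _ _ _ (by ring), hψ0, mul_zero, zero_add] at this
    exact pos_of_mul_pos_left this hψβ.le
  set u := μ / (1 - μ) / k with hu
  have hu0 : 0 < u := by positivity
  have hku : k * u = μ / (1 - μ) := by rw [hu]; field_simp
  have hTu : τ (pt v b w) = pt α β (k * u) := by
    rw [hμ, pt_eq_comb _ _ (by positivity), hku]
    have : μ / (1 - μ) / (1 + μ / (1 - μ)) = μ := by field_simp; ring
    rw [this]
  -- The distances to the first two points determine the coordinate.
  have hdist : ∀ c : ℝ, 0 < c → τ (pt v b c) = pt α β (k * c) → u = w ∨ u * w = c * c := by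
    intro c hc hTc
    have e := hilbertExp_eq_of_isometry hτ (hch.pt_mem c hc) (hch.pt_mem w hw)
    rw [hch.hilbertExp_pt hop hcv hbd hc hw, hTc, hTu,
      hch'.hilbertExp_pt hop' hcv' hbd' (by positivity) (by positivity),
      mul_div_mul_left _ _ hk.ne', mul_div_mul_left _ _ hk.ne'] at e
    exact max_ratio_eq hu0 hw hc e
  have huw : u = w := by
    rcases hdist 1 one_pos hT1 with h | h
    · exact h
    rcases hdist 2 two_pos hT2 with h' | h'
    · exact h'
    · linarith
  rw [hTu, huw]

/-! ### Two chords at the mutual distances of vertex lines -/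

theorem hilbertExp_comm {n : ℕ} {Ω : Set (Euc n)} (hop : IsOpen Ω) (hcv : Convex ℝ Ω)
    (hbd : Bornology.IsBounded Ω) {p q : Euc n} (hp : p ∈ Ω) (hq : q ∈ Ω) :
    hilbertExp Ω p q = hilbertExp Ω q p := by
  have key : ∀ p q : Euc n, p ∈ Ω → q ∈ Ω → hilbertExp Ω p q ≤ hilbertExp Ω q p := by
    intro p q hp hq
    obtain ⟨φ, ψ, hφ, hψ, he⟩ := exists_eq_hilbertExp hop hcv hbd hp hq
    have hu := le_hilbertExp hop hcv hbd hq hp hψ hφ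
    refine le_of_mul_le_mul_right ?_ (mul_pos (hφ q hq) (hψ p hp))
    linarith
  exact le_antisymm (key p q hp hq) (key q p hq hp)

/-- Two chords of `Ω`, from `α₁` to `β₁` and from `α₂` to `β₂`, parametrized by `pt αᵢ βᵢ (kᵢ x)`,
whose mutual distances are those between two vertex lines of a cone. -/
structure LinePair {n : ℕ} (Ω : Set (Euc n)) (α₁ β₁ : Euc n) (k₁ : ℝ) (α₂ β₂ : Euc n) (k₂ : ℝ)
    (A A' : ℝ) : Prop where
  chord₁ : IsChord Ω α₁ β₁
  chord₂ : IsChord Ω α₂ β₂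
  k₁_pos : 0 < k₁
  k₂_pos : 0 < k₂
  A_pos : 0 < A
  A'_pos : 0 < A'
  dist_eq : ∀ x y : ℝ, 0 < x → 0 < y →
    hilbertExp Ω (pt α₁ β₁ (k₁ * x)) (pt α₂ β₂ (k₂ * y)) =
      max 1 (A * (x / y)) * max 1 (A' * (y / x))

theorem LinePair.swap {n : ℕ} {Ω : Set (Euc n)} (hop : IsOpen Ω) (hcv : Convex ℝ Ω)
    (hbd : Bornology.IsBounded Ω) {α₁ β₁ α₂ β₂ : Euc n} {k₁ k₂ A A' : ℝ}
    (h : LinePair Ω α₁ β₁ k₁ α₂ β₂ k₂ A A') : LinePair Ω α₂ β₂ k₂ α₁ β₁ k₁ A' A := by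
  refine ⟨h.chord₂, h.chord₁, h.k₂_pos, h.k₁_pos, h.A'_pos, h.A_pos, fun x y hx hy => ?_⟩
  rw [hilbertExp_comm hop hcv hbd (h.chord₂.pt_mem _ (mul_pos h.k₂_pos hx))
    (h.chord₁.pt_mem _ (mul_pos h.k₁_pos hy)), h.dist_eq y x hy hx, mul_comm]

theorem LinePair.reverse {n : ℕ} {Ω : Set (Euc n)} {α₁ β₁ α₂ β₂ : Euc n} {k₁ k₂ A A' : ℝ}
    (h : LinePair Ω α₁ β₁ k₁ α₂ β₂ k₂ A A') :
    LinePair Ω β₁ α₁ k₁⁻¹ β₂ α₂ k₂⁻¹ A' A := by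
  have h1 := h.k₁_pos
  have h2 := h.k₂_pos
  refine ⟨h.chord₁.symm, h.chord₂.symm, inv_pos.2 h.k₁_pos, inv_pos.2 h.k₂_pos, h.A'_pos, h.A_pos,
    fun x y hx hy => ?_⟩
  rw [IsChord.symm_pt α₁ β₁ (by positivity), IsChord.symm_pt α₂ β₂ (by positivity),
    mul_inv, mul_inv, inv_inv, inv_inv, h.dist_eq _ _ (inv_pos.2 hx) (inv_pos.2 hy), mul_comm]
  congr 3 <;> field_simp

/-- The value of an affine functional at a point of a chord, up to the normalizing factor. -/
theorem affEval_pt_mul {n : ℕ} (w : Euc n × ℝ) (α β : Euc n) {k x : ℝ} (hk : 0 < k) (hx : 0 < x) :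
    (1 + k * x) * affEval w (pt α β (k * x)) = affEval w α + k * x * affEval w β := by
  rw [affEval_pt _ _ _ (mul_pos hk hx)]
  have : 0 < k * x := mul_pos hk hx
  field_simp

theorem LinePair.upper {n : ℕ} {Ω : Set (Euc n)} (hop : IsOpen Ω) (hcv : Convex ℝ Ω)
    (hbd : Bornology.IsBounded Ω) {α₁ β₁ α₂ β₂ : Euc n} {k₁ k₂ A A' : ℝ}
    (h : LinePair Ω α₁ β₁ k₁ α₂ β₂ k₂ A A') {φ ψ : Euc n × ℝ} (hφ : PosOn Ω φ) (hψ : PosOn Ω ψ)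
    {x y : ℝ} (hx : 0 < x) (hy : 0 < y) :
    (affEval φ α₁ + k₁ * x * affEval φ β₁) * (affEval ψ α₂ + k₂ * y * affEval ψ β₂) ≤
      max 1 (A * (x / y)) * max 1 (A' * (y / x)) *
      ((affEval φ α₂ + k₂ * y * affEval φ β₂) * (affEval ψ α₁ + k₁ * x * affEval ψ β₁)) := by
  have hu := le_hilbertExp hop hcv hbd (h.chord₁.pt_mem _ (mul_pos h.k₁_pos hx))
    (h.chord₂.pt_mem _ (mul_pos h.k₂_pos hy)) hφ hψ
  rw [h.dist_eq x y hx hy] at hu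
  rw [← affEval_pt_mul φ α₁ β₁ h.k₁_pos hx, ← affEval_pt_mul φ α₂ β₂ h.k₂_pos hy,
    ← affEval_pt_mul ψ α₁ β₁ h.k₁_pos hx, ← affEval_pt_mul ψ α₂ β₂ h.k₂_pos hy]
  have h1 : 0 < 1 + k₁ * x := by have := mul_pos h.k₁_pos hx; linarith
  have h2 : 0 < 1 + k₂ * y := by have := mul_pos h.k₂_pos hy; linarith
  have := mul_le_mul_of_nonneg_left hu (mul_pos h1 h2).le
  linarith

theorem LinePair.attained {n : ℕ} {Ω : Set (Euc n)} (hop : IsOpen Ω) (hcv : Convex ℝ Ω)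
    (hbd : Bornology.IsBounded Ω) {α₁ β₁ α₂ β₂ : Euc n} {k₁ k₂ A A' : ℝ}
    (h : LinePair Ω α₁ β₁ k₁ α₂ β₂ k₂ A A') {p₀ : Euc n} (hp₀ : p₀ ∈ Ω)
    {x y : ℝ} (hx : 0 < x) (hy : 0 < y) :
    ∃ φ ∈ normalized Ω p₀, ∃ ψ ∈ normalized Ω p₀,
    (affEval φ α₁ + k₁ * x * affEval φ β₁) * (affEval ψ α₂ + k₂ * y * affEval ψ β₂) =
      max 1 (A * (x / y)) * max 1 (A' * (y / x)) *
      ((affEval φ α₂ + k₂ * y * affEval φ β₂) * (affEval ψ α₁ + k₁ * x * affEval ψ β₁)) := by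
  obtain ⟨φ, ψ, hφ, hψ, he⟩ := exists_eq_hilbertExp hop hcv hbd
    (h.chord₁.pt_mem _ (mul_pos h.k₁_pos hx)) (h.chord₂.pt_mem _ (mul_pos h.k₂_pos hy))
  refine ⟨_, hφ.normalize hp₀, _, hψ.normalize hp₀, ?_⟩
  rw [h.dist_eq x y hx hy] at he
  rw [← affEval_pt_mul _ α₁ β₁ h.k₁_pos hx, ← affEval_pt_mul _ α₂ β₂ h.k₂_pos hy,
    ← affEval_pt_mul _ α₁ β₁ h.k₁_pos hx, ← affEval_pt_mul _ α₂ β₂ h.k₂_pos hy,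
    affEval_smul, affEval_smul, affEval_smul, affEval_smul]
  linear_combination (1 + k₁ * x) * (1 + k₂ * y) * (affEval φ p₀)⁻¹ * (affEval ψ p₀)⁻¹ * he

theorem le_at_zero {f g : ℝ → ℝ} (hf : Continuous f) (hg : Continuous g)
    (h : ∀ y, 0 < y → f y ≤ g y) : f 0 ≤ g 0 := by
  refine le_of_tendsto_of_tendsto (b := nhdsWithin (0 : ℝ) (Ioi 0))
    ((hf.tendsto 0).mono_left nhdsWithin_le_nhds)
    ((hg.tendsto 0).mono_left nhdsWithin_le_nhds) ?_
  filter_upwards [self_mem_nhdsWithin] with y hy using h y hy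

/-- Letting both points go to the `α` ends: functionals vanishing at `α₁` vanish at `α₂`, and
the ratio of any functional between `α₁` and `α₂` is controlled by the ratio between `β₁` and
`β₂` of one that vanishes at `α₁`. -/
theorem LinePair.end_bound {n : ℕ} {Ω : Set (Euc n)} (hop : IsOpen Ω) (hcv : Convex ℝ Ω)
    (hbd : Bornology.IsBounded Ω) {α₁ β₁ α₂ β₂ : Euc n} {k₁ k₂ A A' : ℝ}
    (h : LinePair Ω α₁ β₁ k₁ α₂ β₂ k₂ A A') {ψ : Euc n × ℝ} (hψ : PosOn Ω ψ)
    (h0 : affEval ψ α₁ = 0) :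
    affEval ψ α₂ = 0 ∧ ∀ φ, PosOn Ω φ →
      affEval φ α₁ * (k₂ * affEval ψ β₂) ≤ A' * affEval φ α₂ * (k₁ * affEval ψ β₁) := by
  have hk₁ := h.k₁_pos
  have hk₂ := h.k₂_pos
  have hA := h.A_pos
  have hA' := h.A'_pos
  have hψα₂ := hψ.nonneg_closure h.chord₂.left_mem
  have hψβ₂ := hψ.nonneg_closure h.chord₂.right_mem
  have hψβ₁ := h.chord₁.pos_right hψ h0
  have key : ∀ φ, PosOn Ω φ → ∀ y, 0 < y →
      affEval φ α₁ * (affEval ψ α₂ + k₂ * y * affEval ψ β₂) ≤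
        A' * y * ((affEval φ α₂ + k₂ * y * affEval φ β₂) * (k₁ * affEval ψ β₁)) := by
    intro φ hφ y hy
    -- For `x` this small, the distance formula reads `A' * (y / x)`.
    set x := y * min A⁻¹ A' with hxdef
    have hx : 0 < x := by positivity
    have m1 : max 1 (A * (x / y)) = 1 := by
      apply max_eq_left
      have : x / y = min A⁻¹ A' := by rw [hxdef]; field_simp
      rw [this]
      calc A * min A⁻¹ A' ≤ A * A⁻¹ := by gcongr; exact min_le_left _ _
        _ = 1 := mul_inv_cancel₀ hA.ne'
    have m2 : max 1 (A' * (y / x)) = A' * (y / x) := by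
      apply max_eq_right
      rw [mul_div_assoc', le_div_iff₀ hx, one_mul, hxdef, mul_comm A']
      gcongr
      exact min_le_right _ _
    have hu := h.upper hop hcv hbd hφ hψ hx hy
    rw [m1, m2, h0, one_mul, zero_add] at hu
    have hφβ₁ := hφ.nonneg_closure h.chord₁.right_mem
    calc affEval φ α₁ * (affEval ψ α₂ + k₂ * y * affEval ψ β₂)
        ≤ (affEval φ α₁ + k₁ * x * affEval φ β₁) * (affEval ψ α₂ + k₂ * y * affEval ψ β₂) := by
          gcongr
          have : 0 ≤ k₁ * x * affEval φ β₁ := by positivity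
          linarith
      _ ≤ _ := hu
      _ = _ := by field_simp
  have hz : affEval ψ α₂ = 0 := by
    refine le_antisymm ?_ hψα₂
    have := le_at_zero (by fun_prop) (by fun_prop) (key _ (posOn_one Ω))
    simpa [affEval_one] using this
  refine ⟨hz, fun φ hφ => ?_⟩
  have := le_at_zero (f := fun _ => affEval φ α₁ * (k₂ * affEval ψ β₂))
    (g := fun y => A' * ((affEval φ α₂ + k₂ * y * affEval φ β₂) * (k₁ * affEval ψ β₁)))
    (by fun_prop) (by fun_prop) (fun y hy => by
      have e := key φ hφ y hy
      rw [hz] at e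
      refine le_of_mul_le_mul_left ?_ hy
      linarith)
  simp only [mul_zero, zero_mul, add_zero] at this
  linarith

/-- Equality in the bound of `LinePair.end_bound` is attained, by compactness of the set of
normalized functionals. -/
theorem LinePair.end_attained {n : ℕ} {Ω : Set (Euc n)} (hop : IsOpen Ω) (hcv : Convex ℝ Ω)
    (hbd : Bornology.IsBounded Ω) {α₁ β₁ α₂ β₂ : Euc n} {k₁ k₂ A A' : ℝ}
    (h : LinePair Ω α₁ β₁ k₁ α₂ β₂ k₂ A A') :
    ∃ φ ψ, PosOn Ω φ ∧ PosOn Ω ψ ∧ affEval φ β₂ = 0 ∧ affEval ψ α₁ = 0 ∧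
      affEval φ α₁ * (k₂ * affEval ψ β₂) = A' * affEval φ α₂ * (k₁ * affEval ψ β₁) := by
  have hk₁ := h.k₁_pos
  have hk₂ := h.k₂_pos
  have hA := h.A_pos
  have hA' := h.A'_pos
  have hp₀ := h.chord₁.pt_mem 1 one_pos
  set p₀ := pt α₁ β₁ 1
  set δ := min A⁻¹ A' with hδ
  have hδ0 : 0 < δ := by positivity
  set X : ℕ → ℝ := fun j => δ * (1 / ((j : ℝ) + 1)) with hX
  have hX0 : ∀ j, 0 < X j := fun j => by simp only [hX]; positivity
  have hXle : ∀ j, X j ≤ δ := fun j => by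
    have : 1 / ((j : ℝ) + 1) ≤ 1 := by
      rw [div_le_one (by positivity)]; have := Nat.cast_nonneg (α := ℝ) j; linarith
    simp only [hX]
    nlinarith
  have hXlim : Filter.Tendsto X Filter.atTop (nhds 0) := by
    have := (tendsto_one_div_add_atTop_nhds_zero_nat (𝕜 := ℝ)).const_mul δ
    rwa [mul_zero] at this
  have hseq : ∀ j, ∃ r : (Euc n × ℝ) × (Euc n × ℝ),
      r ∈ normalized Ω p₀ ×ˢ normalized Ω p₀ ∧
      X j * ((affEval r.1 α₁ + k₁ * X j * affEval r.1 β₁) *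
        (affEval r.2 α₂ + k₂ * affEval r.2 β₂)) =
      A' * ((affEval r.1 α₂ + k₂ * affEval r.1 β₂) *
        (affEval r.2 α₁ + k₁ * X j * affEval r.2 β₁)) := by
    intro j
    obtain ⟨φ, hφ, ψ, hψ, he⟩ := h.attained hop hcv hbd hp₀ (hX0 j) one_pos
    refine ⟨(φ, ψ), ⟨hφ, hψ⟩, ?_⟩
    have m1 : max 1 (A * (X j / 1)) = 1 := by
      apply max_eq_left
      rw [div_one]
      calc A * X j ≤ A * A⁻¹ := by gcongr; exact (hXle j).trans (min_le_left _ _)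
        _ = 1 := mul_inv_cancel₀ hA.ne'
    have m2 : max 1 (A' * (1 / X j)) = A' * (1 / X j) := by
      apply max_eq_right
      rw [mul_one_div, le_div_iff₀ (hX0 j), one_mul]
      exact (hXle j).trans (min_le_right _ _)
    rw [m1, m2, mul_one] at he
    rw [he]
    have := (hX0 j).ne'
    field_simp
  choose r hr hre using hseq
  obtain ⟨⟨φ, ψ⟩, ⟨hφ, hψ⟩, θ, hθ, hlim⟩ :=
    ((isCompact_normalized hop hp₀).prod (isCompact_normalized hop hp₀)).tendsto_subseq hr
  have hφp := posOn_of_normalized hop hφ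
  have hψp := posOn_of_normalized hop hψ
  have l1 : ∀ z, Filter.Tendsto (fun j => affEval (r (θ j)).1 z) Filter.atTop
      (nhds (affEval φ z)) := fun z =>
    (((continuous_affEval_left z).comp continuous_fst).tendsto (φ, ψ)).comp hlim
  have l2 : ∀ z, Filter.Tendsto (fun j => affEval (r (θ j)).2 z) Filter.atTop
      (nhds (affEval ψ z)) := fun z =>
    (((continuous_affEval_left z).comp continuous_snd).tendsto (φ, ψ)).comp hlim
  have lX : Filter.Tendsto (fun j => X (θ j)) Filter.atTop (nhds 0) :=
    hXlim.comp hθ.tendsto_atTop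
  have c2 : Filter.Tendsto (fun j => affEval (r (θ j)).2 α₂ + k₂ * affEval (r (θ j)).2 β₂)
      Filter.atTop (nhds (affEval ψ α₂ + k₂ * affEval ψ β₂)) :=
    (l2 α₂).add ((l2 β₂).const_mul k₂)
  have c1 : Filter.Tendsto (fun j => affEval (r (θ j)).1 α₂ + k₂ * affEval (r (θ j)).1 β₂)
      Filter.atTop (nhds (affEval φ α₂ + k₂ * affEval φ β₂)) :=
    (l1 α₂).add ((l1 β₂).const_mul k₂)
  have d1 : Filter.Tendsto (fun j => affEval (r (θ j)).1 α₁ + k₁ * X (θ j) * affEval (r (θ j)).1 β₁)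
      Filter.atTop (nhds (affEval φ α₁)) := by
    have := (l1 α₁).add ((lX.const_mul k₁).mul (l1 β₁))
    simpa using this
  have d2 : Filter.Tendsto (fun j => affEval (r (θ j)).2 α₁ + k₁ * X (θ j) * affEval (r (θ j)).2 β₁)
      Filter.atTop (nhds (affEval ψ α₁)) := by
    have := (l2 α₁).add ((lX.const_mul k₁).mul (l2 β₁))
    simpa using this
  have hφ2 : 0 < affEval φ α₂ + k₂ * affEval φ β₂ := by
    have := affEval_pt_mul φ α₂ β₂ hk₂ one_pos
    rw [mul_one] at this
    rw [← this]
    exact mul_pos (by positivity) (hφp _ (h.chord₂.pt_mem _ hk₂))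
  have hψ0 : affEval ψ α₁ = 0 := by
    have t1 := lX.mul (d1.mul c2)
    have t2 := (c1.mul d2).const_mul A'
    have e := tendsto_nhds_unique (t1.congr fun j => hre (θ j)) t2
    rw [zero_mul] at e
    have := mul_pos hA' hφ2
    nlinarith [mul_eq_zero.1 (show (A' * (affEval φ α₂ + k₂ * affEval φ β₂)) * affEval ψ α₁ = 0 by
      linarith) |>.resolve_left this.ne']
  have hψβ₁ := h.chord₁.pos_right hψp hψ0
  have hge : A' * (affEval φ α₂ + k₂ * affEval φ β₂) * (k₁ * affEval ψ β₁) ≤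
      affEval φ α₁ * (affEval ψ α₂ + k₂ * affEval ψ β₂) := by
    refine le_of_tendsto_of_tendsto' ((c1.const_mul A').mul ((l2 β₁).const_mul k₁)) (d1.mul c2)
      fun j => ?_
    have hrj := hr (θ j)
    have q1 := posOn_of_normalized hop hrj.1
    have q2 := posOn_of_normalized hop hrj.2
    have n1 := q1.nonneg_closure h.chord₂.left_mem
    have n2 := q1.nonneg_closure h.chord₂.right_mem
    have n3 := q2.nonneg_closure h.chord₁.left_mem
    refine le_of_mul_le_mul_left ?_ (hX0 (θ j))
    rw [hre (θ j)]
    have : 0 ≤ A' * (affEval (r (θ j)).1 α₂ + k₂ * affEval (r (θ j)).1 β₂) *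
        affEval (r (θ j)).2 α₁ := by positivity
    linarith
  obtain ⟨hψα₂, hub⟩ := h.end_bound hop hcv hbd hψp hψ0
  have hub := hub φ hφp
  rw [hψα₂, zero_add] at hge
  have hφβ₂ : affEval φ β₂ = 0 := by
    refine le_antisymm ?_ (hφp.nonneg_closure h.chord₂.right_mem)
    have e : A' * (k₂ * (k₁ * affEval ψ β₁)) * affEval φ β₂ ≤ 0 := by linarith
    by_contra hc
    have : 0 < A' * (k₂ * (k₁ * affEval ψ β₁)) * affEval φ β₂ :=
      mul_pos (by positivity) (not_le.1 hc)
    linarith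
  refine ⟨φ, ψ, hφp, hψp, hφβ₂, hψ0, le_antisymm hub ?_⟩
  rw [hφβ₂, mul_zero, add_zero] at hge
  exact hge

/-- The sharp bound `R` on ratios between `α₁` and `α₂` and the sharp bound `S` on ratios between
`β₁` and `β₂` are tied by `R = A' S`. -/
theorem LinePair.exists_bounds {n : ℕ} {Ω : Set (Euc n)} (hop : IsOpen Ω) (hcv : Convex ℝ Ω)
    (hbd : Bornology.IsBounded Ω) {α₁ β₁ α₂ β₂ : Euc n} {k₁ k₂ A A' : ℝ}
    (h : LinePair Ω α₁ β₁ k₁ α₂ β₂ k₂ A A') :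
    ∃ R S : ℝ, 0 < R ∧ 0 < S ∧ R = A' * S ∧
      (∀ χ, PosOn Ω χ → affEval χ α₁ ≤ R * affEval χ α₂) ∧
      (∀ χ, PosOn Ω χ → S * (k₂ * affEval χ β₂) ≤ k₁ * affEval χ β₁) := by
  have hk₁ := h.k₁_pos
  have hk₂ := h.k₂_pos
  have hA' := h.A'_pos
  obtain ⟨φ, ψ, hφ, hψ, hφβ₂, hψα₁, he⟩ := h.end_attained hop hcv hbd
  obtain ⟨hψα₂, hb1⟩ := h.end_bound hop hcv hbd hψ hψα₁
  obtain ⟨hφβ₁, hb2⟩ := (h.swap hop hcv hbd).reverse.end_bound hop hcv hbd hφ hφβ₂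
  have hψβ₁ := h.chord₁.pos_right hψ hψα₁
  have hψβ₂ := h.chord₂.pos_right hψ hψα₂
  have hφα₁ := h.chord₁.pos_left hφ hφβ₁
  have hφα₂ := h.chord₂.pos_left hφ hφβ₂
  refine ⟨A' * (k₁ * affEval ψ β₁ / (k₂ * affEval ψ β₂)), k₁ * affEval ψ β₁ / (k₂ * affEval ψ β₂),
    by positivity, by positivity, rfl, fun χ hχ => ?_, fun χ hχ => ?_⟩
  · have := hb1 χ hχ
    rw [mul_div_assoc', div_mul_eq_mul_div, le_div_iff₀ (by positivity)]
    linarith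
  · have h2 := hb2 χ hχ
    rw [div_mul_eq_mul_div, div_le_iff₀ (by positivity)]
    have h3 : affEval χ β₂ * (k₂ * affEval φ α₁) ≤ A' * affEval χ β₁ * (k₁ * affEval φ α₂) := by
      have := mul_le_mul_of_nonneg_left h2 (mul_pos hk₁ hk₂).le
      field_simp at this
      linarith
    have h4 : 0 ≤ affEval χ β₂ := hχ.nonneg_closure h.chord₂.right_mem
    -- Multiply by `φ(α₂)` and eliminate it through the equality of the attained pair.
    refine le_of_mul_le_mul_left ?_ (mul_pos hA' hφα₂)
    calc A' * affEval φ α₂ * (k₁ * affEval ψ β₁ * (k₂ * affEval χ β₂))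
        = (A' * affEval φ α₂ * (k₁ * affEval ψ β₁)) * (k₂ * affEval χ β₂) := by ring
      _ = (affEval χ β₂ * (k₂ * affEval φ α₁)) * (k₂ * affEval ψ β₂) := by rw [← he]; ring
      _ ≤ (A' * affEval χ β₁ * (k₁ * affEval φ α₂)) * (k₂ * affEval ψ β₂) := by gcongr
      _ = _ := by ring

theorem eq_of_forall_posOn {n : ℕ} {Ω : Set (Euc n)} (hbd : Bornology.IsBounded Ω) {a b : Euc n}
    (h : ∀ χ, PosOn Ω χ → affEval χ a = affEval χ b) : a = b := by
  obtain ⟨R, hR⟩ := isBounded_iff_forall_norm_le.1 hbd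
  apply ext_inner_left ℝ
  intro w
  have hpos : PosOn Ω (w, ‖w‖ * |R| + 1) := by
    intro z hz
    have h1 := neg_abs_le (inner ℝ w z)
    have h2 := abs_real_inner_le_norm w z
    have h3 : ‖w‖ * ‖z‖ ≤ ‖w‖ * |R| := by gcongr; exact (hR z hz).trans (le_abs_self R)
    unfold affEval
    simp only
    linarith
  have := h _ hpos
  unfold affEval at this
  simpa using this

/-- The two lines share an end: with the sharp ratio bounds, the distance at the critical
coordinate ratio is at most the larger, and at least the product, of the distances between the
`α` ends and between the `β` ends. -/
theorem LinePair.common_end {n : ℕ} {Ω : Set (Euc n)} (hop : IsOpen Ω) (hcv : Convex ℝ Ω)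
    (hbd : Bornology.IsBounded Ω) {α₁ β₁ α₂ β₂ : Euc n} {k₁ k₂ A A' : ℝ}
    (h : LinePair Ω α₁ β₁ k₁ α₂ β₂ k₂ A A') : α₁ = α₂ ∨ β₁ = β₂ := by
  have hk₁ := h.k₁_pos
  have hk₂ := h.k₂_pos
  have hA := h.A_pos
  have hA' := h.A'_pos
  obtain ⟨R, S, hR, hS, hRS, hα, hβ⟩ := h.exists_bounds hop hcv hbd
  obtain ⟨R', S', hR', hS', hRS', hα', hβ'⟩ := (h.swap hop hcv hbd).exists_bounds hop hcv hbd
  have hR1 : 1 ≤ R := by simpa [affEval_one] using hα _ (posOn_one Ω)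
  have hR1' : 1 ≤ R' := by simpa [affEval_one] using hα' _ (posOn_one Ω)
  have hSk : S * k₂ ≤ k₁ := by simpa [affEval_one] using hβ _ (posOn_one Ω)
  have hSk' : S' * k₁ ≤ k₂ := by simpa [affEval_one] using hβ' _ (posOn_one Ω)
  have hSS : S * S' ≤ 1 := by
    have : S' * (S * k₂) ≤ S' * k₁ := by gcongr
    refine le_of_mul_le_mul_right ?_ hk₂
    linarith
  set x := R * S' with hx
  have hx0 : 0 < x := by positivity
  obtain ⟨χ, hχ, ω, hω, he⟩ := h.attained hop hcv hbd (h.chord₁.pt_mem 1 one_pos) hx0 one_pos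
  have hχ := posOn_of_normalized hop hχ
  have hω := posOn_of_normalized hop hω
  have q : ∀ χ, PosOn Ω χ → 0 < affEval χ α₁ + k₁ * x * affEval χ β₁ := by
    intro χ hχ
    rw [← affEval_pt_mul χ α₁ β₁ hk₁ hx0]
    have := hχ _ (h.chord₁.pt_mem _ (mul_pos hk₁ hx0))
    positivity
  have q' : ∀ χ, PosOn Ω χ → 0 < affEval χ α₂ + k₂ * 1 * affEval χ β₂ := by
    intro χ hχ
    rw [← affEval_pt_mul χ α₂ β₂ hk₂ one_pos]
    have := hχ _ (h.chord₂.pt_mem _ (mul_pos hk₂ one_pos))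
    positivity
  have b1 : affEval χ α₁ + k₁ * x * affEval χ β₁ ≤
      R * (affEval χ α₂ + k₂ * 1 * affEval χ β₂) := by
    have e1 := hα χ hχ
    have e2 : R * (S' * (k₁ * affEval χ β₁)) ≤ R * (k₂ * affEval χ β₂) :=
      mul_le_mul_of_nonneg_left (hβ' χ hχ) hR.le
    rw [hx]
    linarith
  have b2 : affEval ω α₂ + k₂ * 1 * affEval ω β₂ ≤
      max R' (1 / (S * x)) * (affEval ω α₁ + k₁ * x * affEval ω β₁) := by
    have e1 := hα' ω hω
    have e2 := hβ ω hω
    have n1 := hω.nonneg_closure h.chord₁.left_mem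
    have n2 := hω.nonneg_closure h.chord₁.right_mem
    have e3 : R' * affEval ω α₁ ≤ max R' (1 / (S * x)) * affEval ω α₁ := by
      gcongr; exact le_max_left _ _
    have e4 : 1 / (S * x) * (k₁ * x * affEval ω β₁) ≤
        max R' (1 / (S * x)) * (k₁ * x * affEval ω β₁) := by
      gcongr; exact le_max_right _ _
    have e5 : k₂ * affEval ω β₂ ≤ 1 / (S * x) * (k₁ * x * affEval ω β₁) := by
      have : 1 / (S * x) * (k₁ * x * affEval ω β₁) = k₁ * affEval ω β₁ / S := by field_simp
      rw [this, le_div_iff₀ hS]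
      linarith
    linarith
  have hD : A * A' ≤ R * max R' (1 / (S * x)) := by
    have hge : A * A' ≤ max 1 (A * (x / 1)) * max 1 (A' * (1 / x)) := by
      have e : A * A' = (A * (x / 1)) * (A' * (1 / x)) := by field_simp
      rw [e]
      exact mul_le_mul (le_max_right _ _) (le_max_right _ _) (by positivity) (by positivity)
    refine hge.trans (le_of_mul_le_mul_right ?_ (mul_pos (q' χ hχ) (q ω hω)))
    rw [← he]
    have := mul_le_mul b1 b2 (q' ω hω).le (mul_pos hR (q' χ hχ)).le
    linarith
  have hRA : R * R' = A * A' * (S * S') := by rw [hRS, hRS']; ring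
  rcases max_choice R' (1 / (S * x)) with hm | hm <;> rw [hm] at hD
  · right
    have hSS1 : S * S' = 1 := by
      refine le_antisymm hSS ?_
      rw [hRA] at hD
      refine le_of_mul_le_mul_left ?_ (mul_pos hA hA')
      linarith
    have hkk : S * k₂ = k₁ := by
      refine le_antisymm hSk ?_
      have : S * (S' * k₁) ≤ S * k₂ := by gcongr
      rw [← mul_assoc, hSS1] at this
      linarith
    apply eq_of_forall_posOn hbd
    intro χ hχ
    have e1 := hβ χ hχ
    have e2 : S * (S' * (k₁ * affEval χ β₁)) ≤ S * (k₂ * affEval χ β₂) :=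
      mul_le_mul_of_nonneg_left (hβ' χ hχ) hS.le
    rw [← mul_assoc, hSS1, one_mul] at e2
    have e3 := le_antisymm e1 e2
    rw [← mul_assoc, hkk] at e3
    exact (mul_left_cancel₀ hk₁.ne' e3).symm
  · left
    have hRR : R * R' ≤ 1 := by
      rw [hRA]
      calc A * A' * (S * S') ≤ R * (1 / (S * x)) * (S * S') := by gcongr
        _ = 1 := by rw [hx]; field_simp
    have hR1'' : R = 1 := by nlinarith
    have hR'1 : R' = 1 := by nlinarith
    apply eq_of_forall_posOn hbd
    intro χ hχ
    have e1 := hα χ hχ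
    have e2 := hα' χ hχ
    rw [hR1'', one_mul] at e1
    rw [hR'1, one_mul] at e2
    exact le_antisymm e1 e2

/-! ### Recognizing a cone -/

theorem pt_one_injective {n : ℕ} {v h β : Euc n} (e : pt v h 1 = pt v β 1) : h = β := by
  unfold pt at e
  have e2 := add_left_cancel e
  exact smul_right_injective _ (by norm_num : (1 : ℝ) / (1 + 1) ≠ 0) e2

theorem continuous_pt_right {n : ℕ} (v : Euc n) (x : ℝ) : Continuous fun h => pt v h x := by
  unfold pt; fun_prop

/-- If every point of `Ω` lies on a chord from `v` to a point of `B`, and a single supporting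
hyperplane contains `B`, then `Ω` is a cone with vertex `v` and base `B`. -/
theorem isConeWith_of_chords {n : ℕ} {Ω B : Set (Euc n)} {v : Euc n}
    (hop : IsOpen Ω) (hbd : Bornology.IsBounded Ω) (hcv : Convex ℝ Ω) (hB : B.Nonempty)
    (hch : ∀ β ∈ B, IsChord Ω v β) (hcov : ∀ z ∈ Ω, ∃ β ∈ B, ∃ x : ℝ, 0 < x ∧ z = pt v β x)
    {φ : Euc n × ℝ} (hφ : PosOn Ω φ) (hφB : ∀ β ∈ B, affEval φ β = 0) : IsConeWith Ω v B := by
  obtain ⟨b₀, hb₀⟩ := hB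
  have hφv : 0 < affEval φ v := (hch b₀ hb₀).pos_left hφ (hφB b₀ hb₀)
  -- The base is cut out of the hyperplane by an open condition.
  have hBeq : B = {h | affEval φ h = 0 ∧ pt v h 1 ∈ Ω} := by
    ext h
    constructor
    · exact fun hh => ⟨hφB h hh, (hch h hh).pt_mem 1 one_pos⟩
    · rintro ⟨h0, hm⟩
      obtain ⟨β, hβ, x, hx, e⟩ := hcov _ hm
      have e' := congrArg (affEval φ) e
      rw [affEval_pt _ _ _ one_pos, affEval_pt _ _ _ hx, h0, hφB β hβ] at e'
      have hx1 : x = 1 := by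
        field_simp at e'
        nlinarith
      rw [hx1] at e
      rwa [pt_one_injective e]
  have hcomb : ∀ h k : Euc n, ∀ a b : ℝ, a + b = 1 →
      pt v (a • h + b • k) 1 = a • pt v h 1 + b • pt v k 1 := by
    intro h k a b hab
    have : a = 1 - b := by linarith
    subst this
    unfold pt
    module
  have hspan_le : ∀ x ∈ affineSpan ℝ B, affEval φ x = 0 := by
    intro x hx
    refine affineSpan_induction (p := fun x => affEval φ x = 0) hx hφB ?_
    intro c u y z hu hy hz
    have e : affEval φ (c • (u -ᵥ y) +ᵥ z) =
        c * (affEval φ u - affEval φ y) + affEval φ z := by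
      simp only [affEval, vsub_eq_sub, vadd_eq_add, inner_add_right, inner_smul_right,
        inner_sub_right]
      ring
    rw [e, hu, hy, hz]; ring
  refine ⟨(innerₛₗ ℝ φ.1), -φ.2, ?_, ?_, ?_, ⟨b₀, hb₀⟩, ?_, ?_, ?_, ?_, ?_⟩
  · intro h
    have h1 := congrArg (fun f => f v) h
    have h2 := congrArg (fun f => f b₀) h
    have h3 := hφB b₀ hb₀
    simp only [innerₛₗ_apply_apply, LinearMap.zero_apply] at h1 h2
    unfold affEval at h3 hφv
    linarith
  · intro b hb
    have h3 := hφB b hb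
    rw [innerₛₗ_apply_apply]
    unfold affEval at h3
    linarith
  · rw [innerₛₗ_apply_apply]
    unfold affEval at hφv
    intro h
    linarith
  · rw [hBeq]
    rintro h ⟨h0, hm⟩ k ⟨k0, km⟩ a b ha hb hab
    refine ⟨?_, ?_⟩
    · rw [affEval_comb _ _ _ hab, h0, k0]; ring
    · rw [hcomb _ _ _ _ hab]
      exact hcv hm km ha hb hab
  · exact hbd.closure.subset fun β hβ => (hch β hβ).right_mem
  · refine Subset.antisymm (fun β hβ => ?_) intrinsicInterior_subset
    rw [mem_intrinsicInterior]
    refine ⟨⟨β, subset_affineSpan ℝ B hβ⟩, ?_, rfl⟩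
    refine mem_interior.2 ⟨{y | pt v (y : Euc n) 1 ∈ Ω}, ?_, ?_, ?_⟩
    · intro y hy
      have : (y : Euc n) ∈ {h | affEval φ h = 0 ∧ pt v h 1 ∈ Ω} := ⟨hspan_le y y.2, hy⟩
      rw [← hBeq] at this
      exact this
    · exact hop.preimage ((continuous_pt_right v 1).comp continuous_subtype_val)
    · exact (hch β hβ).pt_mem 1 one_pos
  · ext h
    constructor
    · intro hh
      have := hspan_le h hh
      rw [mem_ofPred_eq, innerₛₗ_apply_apply]
      unfold affEval at this
      linarith
    · intro hh
      have h0 : affEval φ h = 0 := by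
        rw [mem_ofPred_eq, innerₛₗ_apply_apply] at hh
        unfold affEval
        linarith
      -- A point close to `b₀` on the way to `h` is still in the base.
      have hcont : Continuous fun t : ℝ => pt v ((1 - t) • b₀ + t • h) 1 := by
        unfold pt; fun_prop
      have hnhds : ∀ᶠ t in nhds (0 : ℝ), pt v ((1 - t) • b₀ + t • h) 1 ∈ Ω := by
        refine hcont.continuousAt.eventually_mem (hop.mem_nhds ?_)
        simpa using (hch b₀ hb₀).pt_mem 1 one_pos
      obtain ⟨ε, hε, hball⟩ := Metric.eventually_nhds_iff.1 hnhds
      have hm := @hball (ε / 2) (by rw [dist_zero_right, Real.norm_eq_abs, abs_of_pos] <;> linarith)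
      have hmem : (1 - ε / 2) • b₀ + (ε / 2) • h ∈ B := by
        rw [hBeq]
        refine ⟨?_, hm⟩
        rw [affEval_comb _ _ _ (by ring), h0, hφB b₀ hb₀]; ring
      have hl := AffineMap.lineMap_mem (2 / ε) (subset_affineSpan ℝ B hb₀)
        (subset_affineSpan ℝ B hmem)
      have e : AffineMap.lineMap b₀ ((1 - ε / 2) • b₀ + (ε / 2) • h) (2 / ε) = h := by
        have e1 : (1 - ε / 2) • b₀ + (ε / 2) • h - b₀ = (ε / 2) • (h - b₀) := by module
        rw [AffineMap.lineMap_apply, vsub_eq_sub, vadd_eq_add, e1, smul_smul]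
        have : 2 / ε * (ε / 2) = 1 := by field_simp
        rw [this]; module
      rw [e] at hl
      exact hl
  · ext z
    simp only [mem_iUnion, openSegment_eq_pt, exists_prop]
    constructor
    · intro hz
      obtain ⟨β, hβ, x, hx, e⟩ := hcov z hz
      exact ⟨β, hβ, x, hx, e⟩
    · rintro ⟨β, hβ, x, hx, rfl⟩
      exact (hch β hβ).pt_mem x hx

/-! ### The image of a cone -/

/-- The images of the vertex lines of a cone are the vertex lines of a cone: either all their
`α` ends or all their `β` ends agree, and the other ends lie in one supporting hyperplane. -/
theorem exists_cone_image {n : ℕ} {Ω Ω' B : Set (Euc n)} {v : Euc n}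
    (hop : IsOpen Ω) (hbd : Bornology.IsBounded Ω) (hcv : Convex ℝ Ω)
    (hop' : IsOpen Ω') (hbd' : Bornology.IsBounded Ω') (hcv' : Convex ℝ Ω')
    {τ : Euc n → Euc n} (hτ : IsHilbertIsometry Ω Ω' τ) (hC : ConeFacts Ω v B)
    {b : Euc n} (hb : b ∈ B) :
    ∃ v' B', IsConeWith Ω' v' B' ∧ ∃ b' ∈ B',
      τ '' openSegment ℝ v b = openSegment ℝ v' b' := by
  choose! α β k hch hk hT using
    fun (c : Euc n) (hc : c ∈ B) => exists_chord_image hop hbd hcv hop' hbd' hcv' hτ hC hc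
  have hpair : ∀ c ∈ B, ∀ d ∈ B, ∃ A A', LinePair Ω' (α c) (β c) (k c) (α d) (β d) (k d) A A' := by
    intro c hc d hd
    obtain ⟨A, A', hA, hA', hdist⟩ := hC.exists_dist_formula hop hcv hbd hc hd
    refine ⟨A, A', hch c hc, hch d hd, hk c hc, hk d hd, hA, hA', fun x y hx hy => ?_⟩
    rw [← hT c hc x hx, ← hT d hd y hy, hilbertExp_eq_of_isometry hτ
      ((hC.chord c hc).pt_mem x hx) ((hC.chord d hd).pt_mem y hy), hdist x y hx hy]
  have hend : ∀ c ∈ B, ∀ d ∈ B, α c = α d ∨ β c = β d := fun c hc d hd => by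
    obtain ⟨A, A', h⟩ := hpair c hc d hd
    exact h.common_end hop' hcv' hbd'
  have hcov : ∀ z ∈ Ω', ∃ c ∈ B, ∃ x : ℝ, 0 < x ∧ z = pt (α c) (β c) x := by
    intro z hz
    obtain ⟨p, hp, rfl⟩ := hτ.2.1 hz
    obtain ⟨c, hc, x, hx, rfl⟩ := hC.cover p hp
    exact ⟨c, hc, k c * x, mul_pos (hk c hc) hx, hT c hc x hx⟩
  have himg : τ '' openSegment ℝ v b = openSegment ℝ (α b) (β b) := by
    have hkb := hk b hb
    rw [openSegment_eq_pt, openSegment_eq_pt]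
    ext z
    constructor
    · rintro ⟨_, ⟨x, hx, rfl⟩, rfl⟩
      exact ⟨k b * x, mul_pos hkb hx, hT b hb x hx⟩
    · rintro ⟨x, hx, rfl⟩
      refine ⟨_, ⟨x / k b, div_pos hx hkb, rfl⟩, ?_⟩
      rw [hT b hb _ (div_pos hx hkb), mul_div_cancel₀ _ hkb.ne']
  have hdich : (∀ c ∈ B, α c = α b) ∨ (∀ c ∈ B, β c = β b) := by
    by_contra hcon
    push Not at hcon
    obtain ⟨⟨c, hc, hαc⟩, d, hd, hβd⟩ := hcon
    have h1 := (hend c hc b hb).resolve_left hαc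
    have h2 := (hend d hd b hb).resolve_right hβd
    rcases hend c hc d hd with h | h
    · exact hαc (h.trans h2)
    · exact hβd (h.symm.trans h1)
  rcases hdich with hα | hβ
  · obtain ⟨φ, hφ, hφ0⟩ := (hch b hb).exists_right
    refine ⟨α b, β '' B, isConeWith_of_chords hop' hbd' hcv' ⟨_, mem_image_of_mem β hb⟩
      ?_ ?_ hφ ?_, β b, mem_image_of_mem β hb, himg⟩
    · rintro _ ⟨c, hc, rfl⟩
      rw [← hα c hc]
      exact hch c hc
    · intro z hz
      obtain ⟨c, hc, x, hx, e⟩ := hcov z hz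
      rw [hα c hc] at e
      exact ⟨_, mem_image_of_mem β hc, x, hx, e⟩
    · rintro _ ⟨c, hc, rfl⟩
      obtain ⟨A, A', h⟩ := hpair b hb c hc
      exact (h.reverse.end_bound hop' hcv' hbd' hφ hφ0).1
  · obtain ⟨φ, hφ, hφ0⟩ := (hch b hb).exists_left
    refine ⟨β b, α '' B, isConeWith_of_chords hop' hbd' hcv' ⟨_, mem_image_of_mem α hb⟩
      ?_ ?_ hφ ?_, α b, mem_image_of_mem α hb, by rw [himg, openSegment_symm]⟩
    · rintro _ ⟨c, hc, rfl⟩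
      rw [← hβ c hc]
      exact (hch c hc).symm
    · intro z hz
      obtain ⟨c, hc, x, hx, e⟩ := hcov z hz
      rw [hβ c hc] at e
      refine ⟨_, mem_image_of_mem α hc, x⁻¹, inv_pos.2 hx, ?_⟩
      rw [IsChord.symm_pt _ _ (inv_pos.2 hx), inv_inv, e]
    · rintro _ ⟨c, hc, rfl⟩
      obtain ⟨A, A', h⟩ := hpair b hb c hc
      exact (h.end_bound hop' hcv' hbd' hφ hφ0).1

/-- If `τ : Ω → Ω'` is an isometry of Hilbert geometries and `Ω` is a
cone, then `Ω'` is a cone; moreover any line in `Ω` from a vertex `v` to a corresponding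
base `B` (i.e. an open segment from `v` to a point `b ∈ B`) is mapped by `τ` onto a line
in `Ω'` from a vertex `v'` of `Ω'` to a corresponding base `B'` of `Ω'`. -/
theorem stmt_7 {n : ℕ} (Ω Ω' : Set (Euc n))
    (hne : Ω.Nonempty) (hop : IsOpen Ω) (hbd : Bornology.IsBounded Ω) (hcv : Convex ℝ Ω)
    (hne' : Ω'.Nonempty) (hop' : IsOpen Ω') (hbd' : Bornology.IsBounded Ω')
    (hcv' : Convex ℝ Ω') (τ : Euc n → Euc n) (hτ : IsHilbertIsometry Ω Ω' τ)
    (hcone : IsCone Ω) :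
    IsCone Ω' ∧
      ∀ v B, IsConeWith Ω v B → ∀ b ∈ B,
        ∃ v' B', IsConeWith Ω' v' B' ∧ ∃ b' ∈ B',
          τ '' openSegment ℝ v b = openSegment ℝ v' b' := by
  have main : ∀ v B, IsConeWith Ω v B → ∀ b ∈ B,
      ∃ v' B', IsConeWith Ω' v' B' ∧ ∃ b' ∈ B',
        τ '' openSegment ℝ v b = openSegment ℝ v' b' := fun v B h b hb =>
    exists_cone_image hop hbd hcv hop' hbd' hcv' hτ h.facts hb
  refine ⟨?_, main⟩
  obtain ⟨v, B, h⟩ := hcone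
  obtain ⟨b, hb⟩ : B.Nonempty := by
    obtain ⟨_, _, _, _, _, hB, _⟩ := h
    exact hB
  obtain ⟨v', B', h', -⟩ := main v B h b hb
  exact ⟨v', B', h'⟩
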